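/- Let f ∈ BV(X). Then there exists a sequence of Lipschitz functions f_k : X → ℝ with f_k → f in L¹_loc(X) such that lim_{k→∞} ∫_X lip f_k dμ = V(f,X), and moreover for every open set U ⊆ X, V(f,U) ≤ liminf_{k→∞} ∫_U lip f_k dμ, and for every closed set F ⊆ X, limsup_{k→∞} ∫_F lip f_k dμ ≤ V(f,F) (that is, the measures (lip f_k)·μ converge weakly* to the variation measure of f). -/

import Mathlib

open MeasureTheory Metric Filter Set Topology
open scoped NNReal ENNReal

noncomputable section

universe u

/-- The measure `μ` is doubling with constant `Cd`:
`0 < μ(B(x,2r)) ≤ Cd·μ(B(x,r)) < ∞` for every `x` and every `r > 0`. -/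
def IsDoublingWith {X : Type u} [PseudoMetricSpace X] [MeasurableSpace X]
    (μ : Measure X) (Cd : ℝ≥0) : Prop :=
  ∀ (x : X) (r : ℝ), 0 < r →
    0 < μ (ball x (2 * r)) ∧
      μ (ball x (2 * r)) ≤ (Cd : ℝ≥0∞) * μ (ball x r) ∧
      (Cd : ℝ≥0∞) * μ (ball x r) < ⊤

/-- `X` is a geodesic space: any two points are joined by a unit-speed geodesic. -/
def IsGeodesic (X : Type u) [PseudoMetricSpace X] : Prop :=
  ∀ x y : X, ∃ γ : ℝ → X,
    LipschitzOnWith 1 γ (Icc 0 (dist x y)) ∧ γ 0 = x ∧ γ (dist x y) = y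

/-- `g` is an upper gradient of `u`: for every `L ≥ 0` and every `1`-Lipschitz curve
`γ : [0,L] → X`, `|u(γ 0) − u(γ L)| ≤ ∫₀^L g(γ t) dt`. -/
def IsUpperGradientOf {X : Type u} [PseudoMetricSpace X] (g u : X → ℝ) : Prop :=
  ∀ L : ℝ, 0 ≤ L → ∀ γ : ℝ → X, LipschitzOnWith 1 γ (Icc 0 L) →
    |u (γ 0) - u (γ L)| ≤ ∫ t in (0:ℝ)..L, g (γ t)

/-- The lower pointwise Lipschitz constant
`lip u (x) = liminf_{r→0} r⁻¹ sup_{y ∈ B(x,r)} |u y − u x|`. -/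
def lipConst {X : Type u} [PseudoMetricSpace X] (u : X → ℝ) (x : X) : ℝ≥0∞ :=
  Filter.liminf
    (fun r : ℝ => ⨆ y ∈ ball x r, ENNReal.ofReal (|u y - u x| / r)) (𝓝[>] (0:ℝ))

/-- `u` is locally Lipschitz on `W`: Lipschitz on every closed bounded subset of `W`. -/
def LocallyLipschitzOnSet {X : Type u} [PseudoMetricSpace X] (u : X → ℝ) (W : Set X) : Prop :=
  ∀ K : Set X, IsClosed K → Bornology.IsBounded K → K ⊆ W →
    ∃ L : ℝ≥0, LipschitzOnWith L u K

/-- `u i → f` in `L¹_loc(W)`. -/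
def TendstoL1loc {X : Type u} [PseudoMetricSpace X] [MeasurableSpace X]
    (μ : Measure X) (u : ℕ → X → ℝ) (f : X → ℝ) (W : Set X) : Prop :=
  ∀ K : Set X, IsClosed K → Bornology.IsBounded K → K ⊆ W →
    Tendsto (fun i => ∫⁻ x in K, ENNReal.ofReal |u i x - f x| ∂μ) atTop (𝓝 0)

/-- Total variation `V(f,W)` of `f` on an open set `W`:
the infimum over sequences of locally Lipschitz functions converging to `f` in `L¹_loc(W)`
of the liminf of `∫_W lip u_i dμ`. -/
def totVarOn {X : Type u} [PseudoMetricSpace X] [MeasurableSpace X]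
    (μ : Measure X) (f : X → ℝ) (W : Set X) : ℝ≥0∞ :=
  ⨅ (us : ℕ → X → ℝ) (_ : ∀ i, LocallyLipschitzOnSet (us i) W)
    (_ : TendstoL1loc μ us f W),
    Filter.liminf (fun i => ∫⁻ x in W, lipConst (us i) x ∂μ) atTop

/-- Total variation `V(f,A)` of `f` on an arbitrary set `A`:
infimum of `V(f,W)` over open `W ⊇ A`. -/
def totVarSet {X : Type u} [PseudoMetricSpace X] [MeasurableSpace X]
    (μ : Measure X) (f : X → ℝ) (A : Set X) : ℝ≥0∞ :=
  ⨅ (W : Set X) (_ : IsOpen W) (_ : A ⊆ W), totVarOn μ f W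

/-- `f` is of bounded variation: locally integrable and `V(f,X) < ∞`. -/
def IsBV {X : Type u} [MetricSpace X] [MeasurableSpace X]
    (μ : Measure X) (f : X → ℝ) : Prop :=
  LocallyIntegrable f μ ∧ totVarOn μ f Set.univ < ⊤

/-- `(X,d,μ)` supports a `1`-Poincaré inequality with constant `CP`. -/
def SupportsPoincare {X : Type u} [MetricSpace X] [MeasurableSpace X]
    (μ : Measure X) (CP : ℝ) : Prop :=
  ∀ u : X → ℝ, LocallyLipschitzOnSet u Set.univ →
    ∀ g : X → ℝ, (∀ x, 0 ≤ g x) → Measurable g → IsUpperGradientOf g u →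
      ∀ (x : X) (r : ℝ), 0 < r →
        (⨍ y in ball x r, |u y - (⨍ z in ball x r, u z ∂μ)| ∂μ) ≤
          CP * r * (⨍ y in ball x r, g y ∂μ)

/-- Standing assumptions: a complete geodesic metric measure space with at least two
points, whose measure is doubling and supports a 1-Poincaré inequality. -/
def GoodSpace (X : Type u) [MetricSpace X] [MeasurableSpace X]
    (μ : Measure X) (Cd : ℝ≥0) (CP : ℝ) : Prop :=
  Nontrivial X ∧ CompleteSpace X ∧ IsGeodesic X ∧
    IsDoublingWith μ Cd ∧ SupportsPoincare μ CP

/-- The codimension-1 Hausdorff measure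
`𝓗(A) = sup_{δ>0} inf { Σ μ(B_i)/r_i : 0 < r_i ≤ δ, A ⊆ ⋃ B_i }`,
the infimum over countable coverings of `A` by balls (balls of nonpositive radius
are empty and contribute `0`). -/
def codimOneH {X : Type u} [PseudoMetricSpace X] [MeasurableSpace X]
    (μ : Measure X) (A : Set X) : ℝ≥0∞ :=
  ⨆ (δ : ℝ) (_ : 0 < δ),
    ⨅ (c : ℕ → X) (r : ℕ → ℝ) (_ : ∀ i, r i ≤ δ)
      (_ : A ⊆ ⋃ i, ball (c i) (r i)),
      ∑' i, if 0 < r i then μ (ball (c i) (r i)) / ENNReal.ofReal (r i) else 0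

/-- The measure theoretic boundary `∂*E`. -/
def measBdry {X : Type u} [PseudoMetricSpace X] [MeasurableSpace X]
    (μ : Measure X) (E : Set X) : Set X :=
  {x : X |
    0 < Filter.limsup (fun r : ℝ => μ (E ∩ ball x r) / μ (ball x r)) (𝓝[>] (0:ℝ)) ∧
    0 < Filter.limsup (fun r : ℝ => μ (Eᶜ ∩ ball x r) / μ (ball x r)) (𝓝[>] (0:ℝ))}

/-- `A` has density `0` at `x`. -/
def DensityZeroAt {X : Type u} [PseudoMetricSpace X] [MeasurableSpace X]
    (μ : Measure X) (A : Set X) (x : X) : Prop :=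
  Tendsto (fun r : ℝ => μ (A ∩ ball x r) / μ (ball x r)) (𝓝[>] (0:ℝ)) (𝓝 0)

/-- `A` has density `1` at `x`. -/
def DensityOneAt {X : Type u} [PseudoMetricSpace X] [MeasurableSpace X]
    (μ : Measure X) (A : Set X) (x : X) : Prop :=
  Tendsto (fun r : ℝ => μ (A ∩ ball x r) / μ (ball x r)) (𝓝[>] (0:ℝ)) (𝓝 1)

/-- `x` is a Lebesgue point of `u`. -/
def LebesguePointOf {X : Type u} [MetricSpace X] [MeasurableSpace X]
    (μ : Measure X) (u : X → ℝ) (x : X) : Prop :=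
  Tendsto (fun r : ℝ => ⨍ y in ball x r, |u y - u x| ∂μ) (𝓝[>] (0:ℝ)) (𝓝 0)

/-- `u` is a Borel representative whose value at each Lebesgue point equals the limit
of its ball averages. -/
def PreciseRep {X : Type u} [MetricSpace X] [MeasurableSpace X]
    (μ : Measure X) (u : X → ℝ) : Prop :=
  Measurable u ∧ ∀ (x : X) (c : ℝ),
    Tendsto (fun r : ℝ => ⨍ y in ball x r, u y ∂μ) (𝓝[>] (0:ℝ)) (𝓝 c) → u x = c

/-- The restricted maximal function `M_R ν (x) = sup_{0<r≤R} ν(B(x,r))/μ(B(x,r))`. -/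
def restrMaximal {X : Type u} [PseudoMetricSpace X] [MeasurableSpace X]
    (μ ν : Measure X) (R : ℝ) (x : X) : ℝ≥0∞ :=
  ⨆ (r : ℝ) (_ : 0 < r) (_ : r ≤ R), ν (ball x r) / μ (ball x r)

/-- `F_g(x,y)`: the infimum of `∫_γ g ds` over 1-Lipschitz curves `γ : [0,L] → Z`
joining `x` to `y` (the infimum over the empty set is `∞`). -/
def curveInf {Z : Type u} [PseudoMetricSpace Z] (g : Z → ℝ) (x y : Z) : ℝ≥0∞ :=
  ⨅ (L : ℝ) (_ : 0 ≤ L) (γ : ℝ → Z) (_ : LipschitzOnWith 1 γ (Icc 0 L))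
    (_ : γ 0 = x) (_ : γ L = y),
    ∫⁻ t in Icc (0:ℝ) L, ENNReal.ofReal (g (γ t))

/-- Weak-star convergence of measures: test against continuous, compactly
supported functions. -/
def WeakStar {Z : Type u} [MetricSpace Z] [MeasurableSpace Z]
    (ν : ℕ → Measure Z) (m : Measure Z) : Prop :=
  ∀ φ : Z → ℝ, Continuous φ → HasCompactSupport φ →
    Tendsto (fun n => ∫ x, φ x ∂(ν n)) atTop (𝓝 (∫ x, φ x ∂m))

/-- `φ ∈ BV_c(U)`: a BV function whose support is compact and contained in `U`. -/
def MemBVc {X : Type u} [MetricSpace X] [MeasurableSpace X]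
    (μ : Measure X) (φ : X → ℝ) (U : Set X) : Prop :=
  IsBV μ φ ∧ IsCompact (tsupport φ) ∧ tsupport φ ⊆ U

theorem lipConst_le_add {X : Type u} [PseudoMetricSpace X] {u h : X → ℝ} {x : X} {K : ℝ}
    (hK : 0 ≤ K) (hh : ∀ᶠ y in 𝓝 x, |h y - h x| ≤ |u y - u x| + K * dist y x) :
    lipConst h x ≤ lipConst u x + ENNReal.ofReal K := by
  obtain ⟨ε, hε, hball⟩ := Metric.eventually_nhds_iff_ball.1 hh
  unfold lipConst
  rw [← liminf_add_const (R := ℝ≥0∞) _ _ _ (by isBoundedDefault) (by isBoundedDefault)]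
  refine liminf_le_liminf ?_
  have hev : ∀ᶠ r : ℝ in 𝓝[>] (0:ℝ), r ∈ Ioo 0 ε := Ioo_mem_nhdsGT hε
  filter_upwards [hev] with r hr
  refine iSup₂_le fun y hy => ?_
  have h1 := hball y (ball_subset_ball hr.2.le hy)
  have h2 : dist y x ≤ r := (mem_ball.1 hy).le
  calc ENNReal.ofReal (|h y - h x| / r)
      ≤ ENNReal.ofReal (|u y - u x| / r + K) := by
        apply ENNReal.ofReal_le_ofReal
        rw [div_add' _ _ _ hr.1.ne']
        gcongr
        · exact hr.1.le
        · nlinarith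
    _ ≤ ENNReal.ofReal (|u y - u x| / r) + ENNReal.ofReal K := ENNReal.ofReal_add_le
    _ ≤ _ := by
        gcongr
        exact le_iSup₂ (f := fun y (_ : y ∈ ball x r) => ENNReal.ofReal (|u y - u x| / r)) y hy

theorem lipConst_le_of_eventuallyEq {X : Type u} [PseudoMetricSpace X] {u h : X → ℝ} {x : X}
    (hh : h =ᶠ[𝓝 x] u) : lipConst h x ≤ lipConst u x := by
  have := lipConst_le_add (u := u) (h := h) (x := x) le_rfl (by
    filter_upwards [hh] with y hy
    rw [hy, hh.eq_of_nhds]; simp)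
  simpa using this

theorem lipConst_le_of_eventually {X : Type u} [PseudoMetricSpace X] {h : X → ℝ} {x : X} {K : ℝ}
    (hK : 0 ≤ K) (hh : ∀ᶠ y in 𝓝 x, |h y - h x| ≤ K * dist y x) :
    lipConst h x ≤ ENNReal.ofReal K := by
  have h0 : lipConst (fun _ : X => (0:ℝ)) x = 0 := by
    simp [lipConst]
  have := lipConst_le_add (u := fun _ => (0:ℝ)) (h := h) (x := x) hK (by simpa using hh)
  simpa [h0] using this

theorem measurable_lipConst {X : Type u} [PseudoMetricSpace X] [MeasurableSpace X] [BorelSpace X]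
    {u : X → ℝ} (hu : Continuous u) : Measurable (lipConst u) := by
  set S : ℝ → X → ℝ≥0∞ := fun r x => ⨆ y ∈ ball x r, ENNReal.ofReal (|u y - u x| / r) with hS
  have hSm : ∀ r, Measurable (S r) := by
    intro r
    refine LowerSemicontinuous.measurable ?_
    intro x a ha
    simp only [hS, lt_iSup_iff] at ha
    obtain ⟨y, hy, hya⟩ := ha
    have h1 : ∀ᶠ z in 𝓝 x, y ∈ ball z r := by
      have : Continuous fun z => dist y z := by fun_prop
      exact this.continuousAt.eventually_lt_const (mem_ball.1 hy)
    have h2 : ∀ᶠ z in 𝓝 x, a < ENNReal.ofReal (|u y - u z| / r) := by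
      have : Continuous fun z => ENNReal.ofReal (|u y - u z| / r) :=
        ENNReal.continuous_ofReal.comp (by fun_prop)
      exact this.continuousAt.eventually_const_lt hya
    filter_upwards [h1, h2] with z hz1 hz2
    exact lt_of_lt_of_le hz2
      (le_iSup₂ (f := fun y (_ : y ∈ ball z r) => ENNReal.ofReal (|u y - u z| / r)) y hz1)
  have hbasis : (𝓝[>] (0:ℝ)).HasBasis (fun _ : ℕ => True) fun n => Ioo 0 (1 / ((n:ℝ) + 1)) := by
    refine (nhdsGT_basis (0:ℝ)).to_hasBasis ?_ ?_
    · intro ε hε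
      obtain ⟨n, hn⟩ := exists_nat_one_div_lt hε
      exact ⟨n, trivial, Ioo_subset_Ioo_right hn.le⟩
    · intro n _
      exact ⟨1 / ((n:ℝ) + 1), by positivity, le_rfl⟩
  have key : lipConst u =
      fun x => ⨆ n : ℕ, ⨅ q : ℚ, ⨅ _ : (q : ℝ) ∈ Ioo 0 (1 / ((n:ℝ) + 1)), S q x := by
    funext x
    unfold lipConst
    rw [hbasis.liminf_eq_iSup_iInf]
    simp only [iSup_true]
    congr 1
    funext n
    refine le_antisymm ?_ ?_
    · exact le_iInf₂ fun q hq => iInf₂_le (q:ℝ) hq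
    · refine le_iInf₂ fun r hr => ?_
      set I := ⨅ q : ℚ, ⨅ _ : (q : ℝ) ∈ Ioo 0 (1 / ((n:ℝ) + 1)), S q x
      have h1 : ∀ q : ℚ, (q : ℝ) ∈ Ioo 0 r → I ≤ ENNReal.ofReal (r / q) * S r x := by
        intro q hq
        refine (iInf₂_le q ⟨hq.1, hq.2.trans hr.2⟩).trans ?_
        refine iSup₂_le fun y hy => ?_
        calc ENNReal.ofReal (|u y - u x| / q)
            = ENNReal.ofReal (r / q) * ENNReal.ofReal (|u y - u x| / r) := by
              rw [← ENNReal.ofReal_mul (by have := hq.1; have := hr.1; positivity)]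
              congr 1
              have := hq.1; have := hr.1
              field_simp
          _ ≤ _ := by
              gcongr
              exact le_iSup₂ (f := fun y (_ : y ∈ ball x r) => ENNReal.ofReal (|u y - u x| / r))
                y (ball_subset_ball hq.2.le hy)
      obtain ⟨q, hqm, hqlt, hqt⟩ := Real.exists_seq_rat_strictMono_tendsto r
      have hq0 : ∀ᶠ k in atTop, (0:ℝ) < q k := hqt.eventually_const_lt hr.1
      by_cases htop : S r x = ⊤
      · change I ≤ S r x
        rw [htop]; exact le_top
      have hlim : Tendsto (fun k => ENNReal.ofReal (r / q k) * S r x) atTop (𝓝 (1 * S r x)) := by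
        refine ENNReal.Tendsto.mul_const ?_ (Or.inr htop)
        rw [← ENNReal.ofReal_one]
        refine ENNReal.tendsto_ofReal ?_
        have := (tendsto_const_nhds (x := r)).div hqt hr.1.ne'
        rwa [div_self hr.1.ne'] at this
      rw [one_mul] at hlim
      refine ge_of_tendsto hlim ?_
      filter_upwards [hq0] with k hk
      exact h1 _ ⟨hk, hqlt k⟩
  rw [key]
  refine Measurable.iSup fun n => Measurable.iInf fun q => Measurable.iInf fun _ => hSm _

theorem ofReal_abs_deriv_le_lipConst {X : Type u} [PseudoMetricSpace X] {u : X → ℝ} {γ : ℝ → X}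
    (hγ : LipschitzWith 1 γ) {t D : ℝ} (hD : HasDerivAt (fun s => u (γ s)) D t) :
    ENNReal.ofReal |D| ≤ lipConst u (γ t) := by
  refine le_of_forall_lt fun a ha => ?_
  have haT : a ≠ ⊤ := ne_top_of_lt ha
  obtain ⟨b, hab, hbD⟩ := exists_between ha
  have hbT : b ≠ ⊤ := ne_top_of_lt hbD
  refine hab.trans_le ?_
  unfold lipConst
  refine le_liminf_of_le (by isBoundedDefault) ?_
  have hb : b.toReal < |D| := by
    rw [ENNReal.lt_ofReal_iff_toReal_lt hbT] at hbD; exact hbD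
  obtain ⟨c, hbc, hcD⟩ := exists_between hb
  have hc0 : 0 < c := lt_of_le_of_lt ENNReal.toReal_nonneg hbc
  have hsl : ∀ᶠ s in 𝓝[>] (0:ℝ), c < |s⁻¹ * (u (γ (t + s)) - u (γ t))| := by
    have h1 := hD.tendsto_slope_zero_right
    exact h1.abs.eventually_const_lt hcD
  obtain ⟨ε, hε, hball⟩ := (mem_nhdsGT_iff_exists_Ioo_subset).1 hsl
  filter_upwards [Ioo_mem_nhdsGT hε] with r hr
  obtain ⟨s, hs1, hs2⟩ : ∃ s, max 0 (r * (b.toReal / c)) < s ∧ s < r := by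
    apply exists_between
    apply max_lt hr.1
    have : b.toReal / c < 1 := (div_lt_one hc0).2 hbc
    have := hr.1
    nlinarith
  have hs0 : 0 < s := (le_max_left _ _).trans_lt hs1
  have hs3 : r * (b.toReal / c) < s := (le_max_right _ _).trans_lt hs1
  have hmem := hball ⟨hs0, hs2.trans hr.2⟩
  have hy : γ (t + s) ∈ ball (γ t) r := by
    rw [mem_ball]
    have := hγ.dist_le_mul (t + s) t
    simp only [NNReal.coe_one, one_mul, Real.dist_eq, add_sub_cancel_left, abs_of_pos hs0] at this
    exact this.trans_lt hs2
  refine le_trans ?_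
    (le_iSup₂ (f := fun y (_ : y ∈ ball (γ t) r) => ENNReal.ofReal (|u y - u (γ t)| / r)) _ hy)
  rw [← ENNReal.ofReal_toReal hbT]
  apply ENNReal.ofReal_le_ofReal
  simp only [mem_ofPred_eq, abs_mul, abs_inv, abs_of_pos hs0] at hmem
  rw [le_div_iff₀ hr.1]
  rw [lt_inv_mul_iff₀ hs0] at hmem
  have : r * b.toReal < s * c := by
    have := mul_lt_mul_of_pos_right hs3 hc0
    rwa [mul_assoc, div_mul_cancel₀ _ hc0.ne'] at this
  linarith

theorem lipConst_le_of_lipschitzOnWith {X : Type u} [PseudoMetricSpace X] {u : X → ℝ} {x : X}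
    {L : ℝ≥0} {s : Set X} (hs : s ∈ 𝓝 x) (hu : LipschitzOnWith L u s) : lipConst u x ≤ L := by
  have := lipConst_le_of_eventually (h := u) (x := x) L.2 (by
    filter_upwards [hs] with y hy
    simpa [Real.dist_eq] using hu.dist_le_mul y hy x (mem_of_mem_nhds hs))
  simpa using this

theorem LocallyLipschitzOnSet.locallyLipschitz_univ {X : Type u} [PseudoMetricSpace X] {u : X → ℝ}
    (hu : LocallyLipschitzOnSet u univ) : LocallyLipschitz u := by
  intro x
  obtain ⟨L, hL⟩ := hu (closedBall x 1) isClosed_closedBall isBounded_closedBall (subset_univ _)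
  exact ⟨L, _, closedBall_mem_nhds x one_pos, hL⟩

theorem LipschitzWith.locallyLipschitzOnSet {X : Type u} [PseudoMetricSpace X] {u : X → ℝ}
    {L : ℝ≥0} (hu : LipschitzWith L u) (W : Set X) : LocallyLipschitzOnSet u W :=
  fun _ _ _ _ => ⟨L, hu.lipschitzOnWith⟩

/-- The pointwise Lipschitz constant of a locally Lipschitz function is an upper gradient. -/
theorem isUpperGradientOf_lipConst {X : Type u} [PseudoMetricSpace X] [MeasurableSpace X]
    [BorelSpace X] {u : X → ℝ} (hu : LocallyLipschitzOnSet u univ) :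
    IsUpperGradientOf (fun x => (lipConst u x).toReal) u := by
  intro L hL γ hγ
  have hproj : LipschitzWith 1 (fun t : ℝ => γ (projIcc 0 L hL t)) := by
    have h1 : LipschitzWith 1 (fun t : ℝ => ((projIcc 0 L hL t : Icc 0 L) : ℝ)) := by
      have := (LipschitzWith.subtype_val (Icc (0:ℝ) L)).comp (LipschitzWith.projIcc hL)
      simpa [Function.comp_def] using this
    refine LipschitzWith.of_dist_le_mul fun s t => ?_
    have h2 := hγ.dist_le_mul _ (projIcc 0 L hL s).2 _ (projIcc 0 L hL t).2
    have h3 := h1.dist_le_mul s t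
    simp only [NNReal.coe_one, one_mul] at *
    exact h2.trans h3
  set c : ℝ → X := fun t : ℝ => γ (projIcc 0 L hL t) with hc
  have hcγ : ∀ t ∈ Icc 0 L, c t = γ t := by
    intro t ht
    simp only [hc, projIcc_of_mem hL ht]
  have hcball : ∀ t, c t ∈ closedBall (γ 0) L := by
    intro t
    have h2 := hγ.dist_le_mul _ (projIcc 0 L hL t).2 0 ⟨le_rfl, hL⟩
    rw [mem_closedBall]
    refine h2.trans ?_
    have h4 := (projIcc 0 L hL t).2
    simp only [NNReal.coe_one, one_mul, Real.dist_eq, sub_zero]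
    rw [abs_of_nonneg h4.1]; exact h4.2
  obtain ⟨M, hM⟩ := hu (closedBall (γ 0) (L + 1)) isClosed_closedBall isBounded_closedBall
    (subset_univ _)
  have hlip : ∀ t, lipConst u (c t) ≤ M := fun t => by
    refine lipConst_le_of_lipschitzOnWith (mem_of_superset (ball_mem_nhds (c t) one_pos) ?_) hM
    refine ball_subset_closedBall.trans (closedBall_subset_closedBall' ?_)
    have := mem_closedBall.1 (hcball t)
    linarith
  have hφ : LipschitzWith M (fun t => u (c t)) := by
    refine LipschitzWith.of_dist_le_mul fun s t => ?_
    have hsub := closedBall_subset_closedBall (x := γ 0) (show L ≤ L + 1 by linarith)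
    refine (hM.dist_le_mul _ (hsub (hcball s)) _ (hsub (hcball t))).trans ?_
    have := hproj.dist_le_mul s t
    simp only [NNReal.coe_one, one_mul] at this
    gcongr
  have hac : AbsolutelyContinuousOnInterval (fun t => u (c t)) 0 L :=
    hφ.lipschitzOnWith.absolutelyContinuousOnInterval
  have hftc := hac.integral_deriv_eq_sub
  have hgm : Measurable (fun t => (lipConst u (c t)).toReal) :=
    ((measurable_lipConst hu.locallyLipschitz_univ.continuous).comp
      hproj.continuous.measurable).ennreal_toReal
  have hint : IntervalIntegrable (fun t => (lipConst u (c t)).toReal) volume 0 L := by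
    refine (intervalIntegrable_const (c := (M:ℝ))).mono_fun hgm.aestronglyMeasurable ?_
    refine Eventually.of_forall fun t => ?_
    simp only [Real.norm_eq_abs, abs_of_nonneg ENNReal.toReal_nonneg, NNReal.abs_eq]
    exact ENNReal.toReal_le_of_le_ofReal M.2 (by simpa using hlip t)
  have e0 : c 0 = γ 0 := hcγ 0 ⟨le_rfl, hL⟩
  have eL : c L = γ L := hcγ L ⟨hL, le_rfl⟩
  calc |u (γ 0) - u (γ L)| = |∫ t in (0:ℝ)..L, deriv (fun t => u (c t)) t| := by
        rw [hftc, e0, eL, abs_sub_comm]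
    _ ≤ ∫ t in (0:ℝ)..L, |deriv (fun t => u (c t)) t| :=
        intervalIntegral.abs_integral_le_integral_abs hL
    _ ≤ ∫ t in (0:ℝ)..L, (lipConst u (c t)).toReal := by
        refine intervalIntegral.integral_mono_ae hL hac.intervalIntegrable_deriv.abs hint ?_
        filter_upwards [hφ.ae_differentiableAt_real] with t ht
        have := ofReal_abs_deriv_le_lipConst (u := u) hproj ht.hasDerivAt
        exact (ENNReal.ofReal_le_iff_le_toReal (ne_top_of_le_ne_top ENNReal.coe_ne_top
          (hlip t))).1 this
    _ = ∫ t in (0:ℝ)..L, (lipConst u (γ t)).toReal := by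
        refine intervalIntegral.integral_congr fun t ht => ?_
        rw [uIcc_of_le hL] at ht
        simp only [hcγ t ht]

/-- A locally Lipschitz function with bounded pointwise Lipschitz constant on a geodesic space is
Lipschitz. -/
theorem IsGeodesic.lipschitzWith_of_lipConst_le {X : Type u} [PseudoMetricSpace X]
    [MeasurableSpace X] [BorelSpace X] (hX : IsGeodesic X) {u : X → ℝ}
    (hu : LocallyLipschitzOnSet u univ) {L : ℝ≥0} (hL : ∀ x, lipConst u x ≤ L) :
    LipschitzWith L u := by
  refine LipschitzWith.of_dist_le_mul fun x y => ?_
  obtain ⟨γ, hγ, h0, h1⟩ := hX x y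
  have h2 := isUpperGradientOf_lipConst hu _ dist_nonneg γ hγ
  rw [h0, h1] at h2
  rw [Real.dist_eq]
  refine h2.trans ?_
  have h3 := intervalIntegral.norm_integral_le_of_norm_le_const (a := 0) (b := dist x y)
    (f := fun t => (lipConst u (γ t)).toReal) (C := (L:ℝ)) (fun t _ => by
      simp only [Real.norm_eq_abs, abs_of_nonneg ENNReal.toReal_nonneg]
      exact ENNReal.toReal_le_of_le_ofReal L.2 (by simpa using hL (γ t)))
  refine (le_abs_self _).trans (h3.trans ?_)
  simp

namespace IsDoublingWith

variable {X : Type u} [PseudoMetricSpace X] [MeasurableSpace X] {μ : Measure X} {Cd : ℝ≥0}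

theorem measure_ball_pos (h : IsDoublingWith μ Cd) (x : X) {r : ℝ} (hr : 0 < r) :
    0 < μ (ball x r) := by
  simpa [mul_div_cancel₀] using (h x (r / 2) (by positivity)).1

theorem measure_ball_lt_top (h : IsDoublingWith μ Cd) (hC : 1 ≤ Cd) (x : X) (r : ℝ) :
    μ (ball x r) < ⊤ := by
  rcases le_or_gt r 0 with hr | hr
  · simp [ball_eq_empty.2 hr]
  · refine lt_of_le_of_lt ?_ (h x r hr).2.2
    have : (1:ℝ≥0∞) ≤ Cd := by exact_mod_cast hC
    simpa using mul_le_mul_left this (μ (ball x r))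

theorem measure_ball_pow_le (h : IsDoublingWith μ Cd) (x : X) {r : ℝ} (hr : 0 < r) (n : ℕ) :
    μ (ball x (2 ^ n * r)) ≤ (Cd : ℝ≥0∞) ^ n * μ (ball x r) := by
  induction n with
  | zero => simp
  | succ n ih =>
    have := (h x (2 ^ n * r) (by positivity)).2.1
    rw [pow_succ', pow_succ', mul_assoc, mul_assoc]
    exact this.trans (by gcongr)

theorem measureReal_ball_pos (h : IsDoublingWith μ Cd) (hC : 1 ≤ Cd) (x : X) {r : ℝ}
    (hr : 0 < r) : 0 < μ.real (ball x r) :=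
  ENNReal.toReal_pos (h.measure_ball_pos x hr).ne' (h.measure_ball_lt_top hC x r).ne

theorem measureReal_ball_pow_le (h : IsDoublingWith μ Cd) (hC : 1 ≤ Cd) (x : X) {r : ℝ}
    (hr : 0 < r) (n : ℕ) :
    μ.real (ball x (2 ^ n * r)) ≤ (Cd : ℝ) ^ n * μ.real (ball x r) := by
  have h1 := h.measure_ball_pow_le x hr n
  have h2 := ENNReal.toReal_mono (ENNReal.mul_ne_top (by simp)
    (h.measure_ball_lt_top hC x r).ne) h1
  simpa [Measure.real] using h2

theorem isFiniteMeasureOnCompacts (h : IsDoublingWith μ Cd) (hC : 1 ≤ Cd) :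
    IsFiniteMeasureOnCompacts μ := by
  refine ⟨fun K hK => ?_⟩
  rcases K.eq_empty_or_nonempty with rfl | ⟨x, _⟩
  · simp
  obtain ⟨r, hr⟩ := hK.isBounded.subset_ball x
  exact (measure_mono hr).trans_lt (h.measure_ball_lt_top hC x r)

theorem properSpace [OpensMeasurableSpace X] [CompleteSpace X] (h : IsDoublingWith μ Cd)
    (hC : 1 ≤ Cd) : ProperSpace X := by
  refine ⟨fun x R => ?_⟩
  refine TotallyBounded.isCompact_of_isClosed ?_ isClosed_closedBall
  rw [Metric.totallyBounded_iff]
  intro ε hε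
  rcases lt_or_ge R 0 with hR | hR
  · exact ⟨∅, finite_empty, by simp [closedBall_eq_empty.2 hR]⟩
  set s : ℝ := min (ε / 8) 1 with hs
  have hs0 : 0 < s := by positivity
  obtain ⟨t, htsub, htdisj, htcov⟩ :=
    Vitali.exists_disjoint_subfamily_covering_enlargement_closedBall (closedBall x R)
      (fun y : X => y) (fun _ => s) s (fun _ _ => le_rfl) 4 (by norm_num)
  obtain ⟨n, hn⟩ := pow_unbounded_of_one_lt ((2 * R + 1) / s) (one_lt_two)
  have hlow : ∀ y ∈ t, μ (ball x (R + 1)) / (Cd : ℝ≥0∞) ^ n ≤ μ (closedBall y s) := by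
    intro y hy
    refine ENNReal.div_le_of_le_mul' ?_
    have h1 : ball x (R + 1) ⊆ ball y (2 ^ n * s) := by
      refine ball_subset_ball' ?_
      have := mem_closedBall.1 (htsub hy)
      rw [dist_comm] at this
      rw [div_lt_iff₀ hs0] at hn
      linarith
    refine (measure_mono h1).trans ((h.measure_ball_pow_le y hs0 n).trans ?_)
    gcongr
    exact ball_subset_closedBall
  have hfin : t.Finite := by
    have h2 := Measure.finite_const_le_meas_of_disjoint_iUnion (ι := t) μ
      (ε := μ (ball x (R + 1)) / (Cd : ℝ≥0∞) ^ n)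
      (ENNReal.div_pos (h.measure_ball_pos x (by linarith)).ne' (by simp))
      (As := fun y : t => closedBall (y : X) s) (fun _ => isClosed_closedBall.measurableSet)
      (fun a b hab => htdisj a.2 b.2 (fun e => hab (Subtype.ext e)))
      (ne_top_of_le_ne_top (h.measure_ball_lt_top hC x (R + 2)).ne (measure_mono (by
        refine iUnion_subset fun y => ?_
        refine closedBall_subset_ball' ?_
        have := mem_closedBall.1 (htsub y.2)
        have : s ≤ 1 := min_le_right _ _
        linarith)))
    have h3 : {i : t | μ (ball x (R + 1)) / (Cd : ℝ≥0∞) ^ n ≤ μ (closedBall (i : X) s)} = univ :=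
      eq_univ_of_forall fun i => hlow i i.2
    rw [h3, finite_univ_iff] at h2
    exact toFinite t
  refine ⟨t, hfin, fun y hy => ?_⟩
  obtain ⟨b, hb, hyb⟩ := htcov y hy
  refine mem_iUnion₂.2 ⟨b, hb, ?_⟩
  have := hyb (mem_closedBall_self hs0.le)
  refine closedBall_subset_ball ?_ this
  have : s ≤ ε / 8 := min_le_left _ _
  linarith

end IsDoublingWith

/-- The Poincaré inequality for a function which is locally Lipschitz on a neighbourhood of a
closed ball. -/
theorem SupportsPoincare.exists_lintegral_sub_le {X : Type u} [MetricSpace X] [MeasurableSpace X]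
    [BorelSpace X] {μ : Measure X} {CP : ℝ} (hP : SupportsPoincare μ CP)
    (hCP : 0 < CP)
    {u : X → ℝ} {x : X} {r : ℝ} (hr : 0 < r)
    (hpos : 0 < μ (ball x r)) (hfin : μ (ball x r) < ⊤)
    {L : ℝ≥0} (hu : LipschitzOnWith L u (closedBall x r)) :
    ∃ c : ℝ, ∫⁻ y in ball x r, ENNReal.ofReal |u y - c| ∂μ ≤
      ENNReal.ofReal (CP * r) * ∫⁻ y in ball x r, lipConst u y ∂μ := by
  obtain ⟨w, hw, hwu⟩ := hu.extend_real
  have hwloc := hw.locallyLipschitzOnSet univ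
  have hm := measurable_lipConst hw.continuous
  have hlw : ∀ y, lipConst w y ≤ L := fun y =>
    lipConst_le_of_lipschitzOnWith univ_mem hw.lipschitzOnWith
  have hmain := hP w hwloc (fun y => (lipConst w y).toReal) (fun _ => ENNReal.toReal_nonneg)
    hm.ennreal_toReal (isUpperGradientOf_lipConst hwloc) x r hr
  set c := ⨍ z in ball x r, w z ∂μ
  refine ⟨c, ?_⟩
  have hballcl : ∀ y ∈ ball x r, u y = w y := fun y hy => hwu (ball_subset_closedBall hy)
  have e1 : ∫⁻ y in ball x r, ENNReal.ofReal |u y - c| ∂μ =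
      ∫⁻ y in ball x r, ENNReal.ofReal |w y - c| ∂μ :=
    setLIntegral_congr_fun measurableSet_ball fun y hy => by
      simp only [hballcl y hy]
  have e2 : ∫⁻ y in ball x r, lipConst u y ∂μ = ∫⁻ y in ball x r, lipConst w y ∂μ := by
    refine setLIntegral_congr_fun measurableSet_ball fun y hy => ?_
    have : u =ᶠ[𝓝 y] w := by
      filter_upwards [isOpen_ball.mem_nhds hy] with z hz using hballcl z hz
    exact le_antisymm (lipConst_le_of_eventuallyEq this) (lipConst_le_of_eventuallyEq this.symm)
  have : IsFiniteMeasure (μ.restrict (ball x r)) := ⟨by simpa using hfin⟩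
  have hintw : Integrable (fun y => |w y - c|) (μ.restrict (ball x r)) := by
    refine Integrable.of_bound (C := L * r + |w x - c|)
      (by have := hw.continuous; exact (by fun_prop : Continuous fun y => |w y - c|).aestronglyMeasurable) ?_
    filter_upwards [ae_restrict_mem measurableSet_ball] with y hy
    rw [Real.norm_eq_abs, abs_abs]
    calc |w y - c| ≤ |w y - w x| + |w x - c| := abs_sub_le _ _ _
      _ ≤ L * r + |w x - c| := by
        gcongr
        have := hw.dist_le_mul y x
        rw [Real.dist_eq] at this
        exact this.trans (by gcongr; exact (mem_ball.1 hy).le)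
  have hintg : Integrable (fun y => (lipConst w y).toReal) (μ.restrict (ball x r)) := by
    refine Integrable.of_bound (C := L) hm.ennreal_toReal.aestronglyMeasurable ?_
    refine Eventually.of_forall fun y => ?_
    rw [Real.norm_eq_abs, abs_of_nonneg ENNReal.toReal_nonneg]
    exact ENNReal.toReal_le_of_le_ofReal L.2 (by simpa using hlw y)
  have hμ : 0 < μ.real (ball x r) := ENNReal.toReal_pos hpos.ne' hfin.ne
  have hmain2 : ∫ y in ball x r, |w y - c| ∂μ ≤
      CP * r * ∫ y in ball x r, (lipConst w y).toReal ∂μ := by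
    rw [setAverage_eq, setAverage_eq, smul_eq_mul, smul_eq_mul] at hmain
    have h1 := mul_le_mul_of_nonneg_left hmain hμ.le
    rw [← mul_assoc, mul_inv_cancel₀ hμ.ne', one_mul] at h1
    refine h1.trans (le_of_eq ?_)
    field_simp
  rw [e1, e2]
  calc ∫⁻ y in ball x r, ENNReal.ofReal |w y - c| ∂μ
      = ENNReal.ofReal (∫ y in ball x r, |w y - c| ∂μ) :=
        (ofReal_integral_eq_lintegral_ofReal hintw (Eventually.of_forall fun _ => abs_nonneg _)).symm
    _ ≤ ENNReal.ofReal (CP * r * ∫ y in ball x r, (lipConst w y).toReal ∂μ) :=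
        ENNReal.ofReal_le_ofReal hmain2
    _ = ENNReal.ofReal (CP * r) * ∫⁻ y in ball x r, lipConst w y ∂μ := by
        rw [ENNReal.ofReal_mul (by positivity), ofReal_integral_eq_lintegral_ofReal hintg
          (Eventually.of_forall fun _ => ENNReal.toReal_nonneg)]
        congr 1
        refine lintegral_congr fun y => ENNReal.ofReal_toReal ?_
        exact ne_top_of_le_ne_top ENNReal.coe_ne_top (hlw y)

section LocallyLipschitz

variable {X : Type u} [PseudoMetricSpace X] {u : X → ℝ} {W W' : Set X}

theorem LocallyLipschitzOnSet.mono (hu : LocallyLipschitzOnSet u W) (h : W' ⊆ W) :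
    LocallyLipschitzOnSet u W' :=
  fun K hK hKb hKW => hu K hK hKb (hKW.trans h)

theorem LocallyLipschitzOnSet.exists_mem_nhds (hu : LocallyLipschitzOnSet u W) (hW : IsOpen W)
    {x : X} (hx : x ∈ W) : ∃ L : ℝ≥0, ∃ s ∈ 𝓝 x, LipschitzOnWith L u s := by
  obtain ⟨r, hr, hrW⟩ := nhds_basis_closedBall.mem_iff.1 (hW.mem_nhds hx)
  obtain ⟨L, hL⟩ := hu _ isClosed_closedBall isBounded_closedBall hrW
  exact ⟨L, _, closedBall_mem_nhds x hr, hL⟩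

theorem LocallyLipschitzOnSet.continuousOn (hu : LocallyLipschitzOnSet u W) (hW : IsOpen W) :
    ContinuousOn u W := by
  intro x hx
  obtain ⟨L, s, hs, hL⟩ := hu.exists_mem_nhds hW hx
  exact (hL.continuousOn.continuousAt hs).continuousWithinAt

theorem locallyLipschitzOnSet_of_exists_mem_nhds [ProperSpace X]
    (h : ∀ x ∈ W, ∃ L : ℝ≥0, ∃ s ∈ 𝓝 x, LipschitzOnWith L u s) : LocallyLipschitzOnSet u W := by
  intro K hK hKb hKW
  have hKc : IsCompact K := isCompact_of_isClosed_isBounded hK hKb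
  refine LocallyLipschitzOn.exists_lipschitzOnWith_of_compact hKc fun x hx => ?_
  obtain ⟨L, s, hs, hL⟩ := h x (hKW hx)
  exact ⟨L, s, mem_nhdsWithin_of_mem_nhds hs, hL⟩

end LocallyLipschitz

section Annulus

variable {X : Type u} [PseudoMetricSpace X]

/-- The dyadic annulus `2^(j-1) < dist x x0 < 2^(j+2)`. -/
def dyadicAnnulus (x0 : X) (j : ℕ) : Set X :=
  {x | (2:ℝ) ^ j < 2 * dist x x0 ∧ dist x x0 < 4 * 2 ^ j}

theorem isOpen_dyadicAnnulus (x0 : X) (j : ℕ) : IsOpen (dyadicAnnulus x0 j) :=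
  (isOpen_lt (f := fun _ : X => (2:ℝ) ^ j) (g := fun x => 2 * dist x x0) (by fun_prop)
    (by fun_prop)).inter
    (isOpen_lt (f := fun x => dist x x0) (g := fun _ : X => (4:ℝ) * 2 ^ j) (by fun_prop)
      (by fun_prop))

theorem tsum_indicator_dyadicAnnulus_le (x0 : X) (g : X → ℝ≥0∞) (x : X) :
    ∑' j, (dyadicAnnulus x0 j).indicator g x ≤ 3 * g x := by
  classical
  by_cases hex : ∃ j, x ∈ dyadicAnnulus x0 j
  · set j0 := Nat.find hex with hj0
    have h0 : x ∈ dyadicAnnulus x0 j0 := Nat.find_spec hex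
    rw [tsum_eq_sum (s := Finset.Ico j0 (j0 + 3))]
    · refine (Finset.sum_le_card_nsmul _ _ (g x) fun j _ => indicator_le_self _ _ _).trans ?_
      simp
    · intro j hj
      refine indicator_of_notMem (fun hx => hj ?_) _
      refine Finset.mem_Ico.2 ⟨Nat.find_min' hex hx, ?_⟩
      have h1 : (2:ℝ) ^ j < 2 ^ (j0 + 3) := by
        have h2 := hx.1
        have h3 := h0.2
        rw [pow_add]
        linarith
      exact (pow_lt_pow_iff_right₀ (by norm_num)).1 h1
  · push Not at hex
    have : ∀ j, (dyadicAnnulus x0 j).indicator g x = 0 := fun j => indicator_of_notMem (hex j) _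
    simp [this]

end Annulus

section Variation

variable {X : Type u} [PseudoMetricSpace X] [MeasurableSpace X] {μ : Measure X} {f : X → ℝ}
  {W W' : Set X}

theorem TendstoL1loc.mono {us : ℕ → X → ℝ} (hu : TendstoL1loc μ us f W) (h : W' ⊆ W) :
    TendstoL1loc μ us f W' :=
  fun K hK hKb hKW => hu K hK hKb (hKW.trans h)

theorem totVarOn_le_liminf {us : ℕ → X → ℝ} (h1 : ∀ i, LocallyLipschitzOnSet (us i) W)
    (h2 : TendstoL1loc μ us f W) :
    totVarOn μ f W ≤ liminf (fun i => ∫⁻ x in W, lipConst (us i) x ∂μ) atTop :=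
  iInf_le_of_le us (iInf₂_le_of_le h1 h2 le_rfl)

theorem totVarOn_mono (h : W' ⊆ W) : totVarOn μ f W' ≤ totVarOn μ f W := by
  refine le_iInf fun us => le_iInf₂ fun h1 h2 => ?_
  refine (totVarOn_le_liminf (fun i => (h1 i).mono h) (h2.mono h)).trans ?_
  exact liminf_le_liminf (Eventually.of_forall fun i => lintegral_mono_set h)

/-- Approximation of a function of bounded variation by a locally Lipschitz function. -/
theorem exists_approx (hV : totVarOn μ f W ≠ ⊤) {K : Set X} (hK : IsClosed K)
    (hKb : Bornology.IsBounded K) (hKW : K ⊆ W) {ε : ℝ} (hε : 0 < ε) :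
    ∃ u : X → ℝ, LocallyLipschitzOnSet u W ∧
      ∫⁻ x in K, ENNReal.ofReal |u x - f x| ∂μ ≤ ENNReal.ofReal ε ∧
      ∫⁻ x in W, lipConst u x ∂μ ≤ totVarOn μ f W + ENNReal.ofReal ε := by
  have hε' : ENNReal.ofReal ε ≠ 0 := by simpa using hε
  have hlt := ENNReal.lt_add_right hV hε'
  conv_lhs at hlt => unfold totVarOn
  simp only [iInf_lt_iff] at hlt
  obtain ⟨us, h1, h2, h3⟩ := hlt
  have h4 := frequently_lt_of_liminf_lt (by isBoundedDefault) h3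
  have h5 := (h2 K hK hKb hKW).eventually_lt_const (pos_iff_ne_zero.2 hε')
  obtain ⟨i, hi, hi'⟩ := (h4.and_eventually h5).exists
  exact ⟨us i, h1 i, hi'.le, hi.le⟩

theorem tendstoL1loc_univ_of_le {us : ℕ → X → ℝ} (x0 : X) {r e : ℕ → ℝ}
    (hr : Tendsto r atTop atTop) (he : Tendsto e atTop (𝓝 0))
    (h : ∀ n, ∫⁻ x in closedBall x0 (r n), ENNReal.ofReal |us n x - f x| ∂μ ≤
      ENNReal.ofReal (e n)) :
    TendstoL1loc μ us f univ := by
  intro K _ hKb _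
  obtain ⟨R, hR⟩ := hKb.subset_closedBall x0
  have he' : Tendsto (fun n => ENNReal.ofReal (e n)) atTop (𝓝 0) := by
    simpa using ENNReal.tendsto_ofReal he
  refine tendsto_of_tendsto_of_tendsto_of_le_of_le' tendsto_const_nhds he'
    (Eventually.of_forall fun _ => zero_le) ?_
  filter_upwards [hr.eventually_ge_atTop R] with n hn
  exact (lintegral_mono_set (hR.trans (closedBall_subset_closedBall hn))).trans (h n)

theorem totVarOn_univ_le_of_exists (x0 : X) {E : ℝ≥0∞}
    (h : ∀ R ε : ℝ, 0 < R → 0 < ε → ∃ u : X → ℝ, LocallyLipschitzOnSet u univ ∧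
      ∫⁻ x in closedBall x0 R, ENNReal.ofReal |u x - f x| ∂μ ≤ ENNReal.ofReal ε ∧
      ∫⁻ x, lipConst u x ∂μ ≤ E + ENNReal.ofReal ε) :
    totVarOn μ f univ ≤ E := by
  choose! u hu1 hu2 hu3 using h
  set us : ℕ → X → ℝ := fun n => u ((n:ℝ) + 1) (1 / ((n:ℝ) + 1))
  have h0 : Tendsto (fun n : ℕ => 1 / ((n:ℝ) + 1)) atTop (𝓝 0) :=
    tendsto_one_div_add_atTop_nhds_zero_nat
  have h1 : TendstoL1loc μ us f univ := by
    refine tendstoL1loc_univ_of_le x0 (r := fun n => (n:ℝ) + 1) (e := fun n => 1 / ((n:ℝ) + 1))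
      ?_ h0 fun n => hu2 _ _ (by positivity) (by positivity)
    exact tendsto_atTop_add_const_right _ _ tendsto_natCast_atTop_atTop
  refine (totVarOn_le_liminf (fun n => hu1 _ _ (by positivity) (by positivity)) h1).trans ?_
  have h2 : Tendsto (fun n : ℕ => E + ENNReal.ofReal (1 / ((n:ℝ) + 1))) atTop (𝓝 E) := by
    simpa using (tendsto_const_nhds (x := E)).add (ENNReal.tendsto_ofReal h0)
  refine (liminf_le_liminf (Eventually.of_forall fun n => ?_)).trans h2.liminf_eq.le
  rw [setLIntegral_univ]
  exact hu3 _ _ (by positivity) (by positivity)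

theorem tsum_totVarOn_dyadicAnnulus_le [BorelSpace X] (x0 : X) :
    ∑' j, totVarOn μ f (dyadicAnnulus x0 j) ≤ 3 * totVarOn μ f univ := by
  conv_rhs => unfold totVarOn
  simp only [ENNReal.mul_iInf_of_ne (show (3:ℝ≥0∞) ≠ 0 by simp) (show (3:ℝ≥0∞) ≠ ⊤ by simp)]
  refine le_iInf fun us => le_iInf₂ fun h1 h2 => ?_
  have hm : ∀ i, Measurable (lipConst (us i)) := fun i =>
    measurable_lipConst (h1 i).locallyLipschitz_univ.continuous
  calc ∑' j, totVarOn μ f (dyadicAnnulus x0 j)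
      ≤ ∑' j, liminf (fun i => ∫⁻ x in dyadicAnnulus x0 j, lipConst (us i) x ∂μ) atTop :=
        ENNReal.tsum_le_tsum fun j => totVarOn_le_liminf
          (fun i => (h1 i).mono (subset_univ _)) (h2.mono (subset_univ _))
    _ ≤ liminf (fun i => ∑' j, ∫⁻ x in dyadicAnnulus x0 j, lipConst (us i) x ∂μ) atTop := by
        have := lintegral_liminf_le (μ := Measure.count) (u := atTop)
          (f := fun (i j : ℕ) => ∫⁻ x in dyadicAnnulus x0 j, lipConst (us i) x ∂μ)
          (fun i => measurable_of_countable _)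
        simpa only [lintegral_count] using this
    _ ≤ liminf (fun i => 3 * ∫⁻ x in univ, lipConst (us i) x ∂μ) atTop := by
        refine liminf_le_liminf (Eventually.of_forall fun i => ?_)
        simp only [setLIntegral_univ]
        simp_rw [← lintegral_indicator (isOpen_dyadicAnnulus x0 _).measurableSet]
        rw [← lintegral_tsum fun j =>
          ((hm i).indicator (isOpen_dyadicAnnulus x0 j).measurableSet).aemeasurable,
          ← lintegral_const_mul _ (hm i)]
        exact lintegral_mono fun x => tsum_indicator_dyadicAnnulus_le x0 _ x
    _ = _ := ENNReal.liminf_const_mul_of_ne_top (by simp)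

/-- Poincaré inequality for functions of bounded variation. -/
theorem SupportsPoincare.exists_lintegral_sub_le_totVarOn {X : Type u} [MetricSpace X]
    [MeasurableSpace X] [BorelSpace X] {μ : Measure X} {CP : ℝ} (hP : SupportsPoincare μ CP)
    (hCP : 0 < CP) {f : X → ℝ} {A : Set X} (hA : IsOpen A) (hV : totVarOn μ f A ≠ ⊤)
    {x : X} {r : ℝ} (hr : 0 < r)
    (hpos : 0 < μ (ball x r)) (hfin : μ (ball x r) < ⊤) (hball : closedBall x r ⊆ A)
    {ε : ℝ} (hε : 0 < ε) :
    ∃ c : ℝ, ∫⁻ y in ball x r, ENNReal.ofReal |f y - c| ∂μ ≤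
      ENNReal.ofReal (CP * r) * totVarOn μ f A + ENNReal.ofReal ε := by
  have hCr : 0 < CP * r := by positivity
  obtain ⟨u, hu, hu1, hu2⟩ := exists_approx hV isClosed_closedBall isBounded_closedBall hball
    (ε := ε / (CP * r + 1)) (by positivity)
  obtain ⟨L, hL⟩ := hu _ isClosed_closedBall isBounded_closedBall hball
  obtain ⟨c, hc⟩ := hP.exists_lintegral_sub_le hCP hr hpos hfin hL
  refine ⟨c, ?_⟩
  have hm : AEMeasurable (fun y => ENNReal.ofReal |u y - c|) (μ.restrict (ball x r)) := by
    have h1 : ContinuousOn u (ball x r) :=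
      (hu.continuousOn hA).mono (ball_subset_closedBall.trans hball)
    have h2 : ContinuousOn (fun y => ENNReal.ofReal |u y - c|) (ball x r) :=
      ENNReal.continuous_ofReal.comp_continuousOn (by fun_prop)
    exact h2.aemeasurable measurableSet_ball
  calc ∫⁻ y in ball x r, ENNReal.ofReal |f y - c| ∂μ
      ≤ ∫⁻ y in ball x r, (ENNReal.ofReal |u y - f y| + ENNReal.ofReal |u y - c|) ∂μ := by
        refine lintegral_mono fun y => ?_
        rw [← ENNReal.ofReal_add (abs_nonneg _) (abs_nonneg _)]
        refine ENNReal.ofReal_le_ofReal ?_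
        rw [abs_sub_comm (u y) (f y)]
        exact abs_sub_le _ _ _
    _ = ∫⁻ y in ball x r, ENNReal.ofReal |u y - f y| ∂μ +
        ∫⁻ y in ball x r, ENNReal.ofReal |u y - c| ∂μ := lintegral_add_right' _ hm
    _ ≤ ENNReal.ofReal (ε / (CP * r + 1)) +
        ENNReal.ofReal (CP * r) * (totVarOn μ f A + ENNReal.ofReal (ε / (CP * r + 1))) := by
        gcongr
        · exact (lintegral_mono_set ball_subset_closedBall).trans hu1
        · refine hc.trans ?_
          gcongr
          exact (lintegral_mono_set (ball_subset_closedBall.trans hball)).trans hu2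
    _ = ENNReal.ofReal (CP * r) * totVarOn μ f A + ENNReal.ofReal ε := by
        have : ENNReal.ofReal ε = ENNReal.ofReal (ε / (CP * r + 1)) +
            ENNReal.ofReal (CP * r) * ENNReal.ofReal (ε / (CP * r + 1)) := by
          rw [← ENNReal.ofReal_mul hCr.le, ← ENNReal.ofReal_add (by positivity) (by positivity)]
          congr 1
          field_simp
          ring
        rw [this]
        ring

end Variation

/-- The truncation of `u` to the interval `[v - ψ, v + ψ]`. -/
def clampAround (u v ψ : ℝ) : ℝ := max (v - ψ) (min u (v + ψ))

theorem abs_clampAround_sub_le {u v ψ : ℝ} (hψ : 0 ≤ ψ) (a : ℝ) :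
    |clampAround u v ψ - a| ≤ |u - a| + |v - a| := by
  have h1 : clampAround u v ψ ≤ max u v := by
    refine max_le ?_ ?_
    · exact (by linarith : v - ψ ≤ v).trans (le_max_right _ _)
    · exact (min_le_left _ _).trans (le_max_left _ _)
  have h2 : min u v ≤ clampAround u v ψ := by
    refine le_trans ?_ (le_max_right _ _)
    exact le_min (min_le_left _ _) ((min_le_right _ _).trans (by linarith))
  rw [abs_le]
  have := neg_abs_le (u - a)
  have := neg_abs_le (v - a)
  have := le_abs_self (u - a)
  have := le_abs_self (v - a)
  have := abs_nonneg (u - a)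
  have := abs_nonneg (v - a)
  constructor
  · rcases min_choice u v with h | h <;> rw [h] at h2 <;> linarith
  · rcases max_choice u v with h | h <;> rw [h] at h1 <;> linarith

theorem clampAround_zero (u v : ℝ) : clampAround u v 0 = v := by
  simp [clampAround]

theorem clampAround_of_abs_le {u v ψ : ℝ} (h : |u - v| ≤ ψ) : clampAround u v ψ = u := by
  rw [abs_le] at h
  unfold clampAround
  rw [min_eq_left (by linarith), max_eq_right (by linarith)]

theorem clampAround_of_le_sub {u v ψ : ℝ} (hψ : 0 ≤ ψ) (h : ψ ≤ u - v) :
    clampAround u v ψ = v + ψ := by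
  unfold clampAround
  rw [min_eq_right (by linarith), max_eq_right (by linarith)]

theorem clampAround_of_le_sub' {u v ψ : ℝ} (hψ : 0 ≤ ψ) (h : ψ ≤ v - u) :
    clampAround u v ψ = v - ψ := by
  unfold clampAround
  rw [min_eq_left (by linarith), max_eq_left (by linarith)]

/-- Selection of a good level in the gluing construction. -/
theorem exists_level {X : Type u} [MeasurableSpace X] {μ : Measure X} [SigmaFinite μ]
    {ρ δ : X → ℝ} (hρ : Measurable ρ) (hδ : Measurable δ) {Λ : ℝ} (hΛ : 0 < Λ) :
    ∃ s ∈ Ioo (0:ℝ) (1 / 2), μ {x | ρ x = s} = 0 ∧ μ {x | ρ x - δ x / Λ = s} = 0 ∧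
      ENNReal.ofReal Λ * μ {x | s < ρ x ∧ ρ x ≤ 3 / 4 ∧ Λ * (ρ x - s) < δ x} ≤
        2 * ∫⁻ x in {x | 0 ≤ ρ x ∧ ρ x ≤ 1}, ENNReal.ofReal (δ x) ∂μ := by
  set T : Set X := {x | 0 ≤ ρ x ∧ ρ x ≤ 1} with hT
  have hTm : MeasurableSet T :=
    (measurableSet_le measurable_const hρ).inter (measurableSet_le hρ measurable_const)
  set B : Set (ℝ × X) :=
    {p | p.1 < ρ p.2 ∧ ρ p.2 ≤ 3 / 4 ∧ Λ * (ρ p.2 - p.1) < δ p.2} with hB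
  have hBm : MeasurableSet B := by
    have h1 : Measurable fun p : ℝ × X => ρ p.2 := hρ.comp measurable_snd
    have h2 : Measurable fun p : ℝ × X => δ p.2 := hδ.comp measurable_snd
    exact (measurableSet_lt measurable_fst h1).inter ((measurableSet_le h1 measurable_const).inter
      (measurableSet_lt ((h1.sub measurable_fst).const_mul Λ) h2))
  set I : Set ℝ := Ioo (0:ℝ) (1 / 2) with hI
  have hIv : volume I = ENNReal.ofReal (1 / 2) := by rw [hI, Real.volume_Ioo, sub_zero]
  set N : Set ℝ := {s | 0 < μ {x | ρ x = s}} ∪ {s | 0 < μ {x | ρ x - δ x / Λ = s}} ∪ Iᶜ with hN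
  have hN0 : volume.restrict I N = 0 := by
    have c1 : ({s | 0 < μ {x | ρ x = s}} : Set ℝ).Countable :=
      Measure.countable_meas_level_set_pos hρ
    have c2 : ({s | 0 < μ {x | ρ x - δ x / Λ = s}} : Set ℝ).Countable :=
      Measure.countable_meas_level_set_pos (hρ.sub (hδ.div_const Λ))
    refine measure_union_null ((c1.union c2).measure_zero _) ?_
    rw [Measure.restrict_apply measurableSet_Ioo.compl, compl_inter_self, measure_empty]
  set F : ℝ → ℝ≥0∞ := fun s => μ {x | s < ρ x ∧ ρ x ≤ 3 / 4 ∧ Λ * (ρ x - s) < δ x} with hF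
  have hFm : Measurable F := measurable_measure_prodMk_left hBm
  have hInonzero : volume.restrict I ≠ 0 := by
    intro h
    have h2 : volume.restrict I univ = 0 := by rw [h]; rfl
    rw [Measure.restrict_apply_univ, hIv] at h2
    norm_num at h2
  obtain ⟨s, hsN, hs⟩ := exists_notMem_null_le_laverage hInonzero hFm.aemeasurable hN0
  simp only [hN, mem_union, not_or, mem_ofPred_eq, not_lt, notMem_compl_iff,
    nonpos_iff_eq_zero] at hsN
  refine ⟨s, hsN.2, hsN.1.1, hsN.1.2, ?_⟩
  have hint : ∫⁻ s in I, F s ≤ ∫⁻ x in T, ENNReal.ofReal (δ x / Λ) ∂μ := by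
    have h1 : ∀ s ∈ I, F s = ∫⁻ x in T, B.indicator 1 (s, x) ∂μ := by
      intro s hs
      have h2 : ∀ x, B.indicator (1 : ℝ × X → ℝ≥0∞) (s, x) =
          ({x | s < ρ x ∧ ρ x ≤ 3 / 4 ∧ Λ * (ρ x - s) < δ x} : Set X).indicator 1 x := by
        intro x; rfl
      simp_rw [h2]
      have h3 : MeasurableSet {x | s < ρ x ∧ ρ x ≤ 3 / 4 ∧ Λ * (ρ x - s) < δ x} :=
        measurable_prodMk_left hBm
      rw [lintegral_indicator_one h3, Measure.restrict_apply h3]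
      simp only [hF]
      congr 1
      ext x
      simp only [mem_inter_iff, mem_ofPred_eq, hT]
      refine ⟨fun h => ⟨h, ?_, ?_⟩, fun h => h.1⟩
      · exact (hs.1.trans h.1).le
      · linarith [h.2.1]
    rw [setLIntegral_congr_fun measurableSet_Ioo h1,
      lintegral_lintegral_swap (f := fun s x => B.indicator (1 : ℝ × X → ℝ≥0∞) (s, x))
        (measurable_one.indicator hBm).aemeasurable]
    refine lintegral_mono fun x => ?_
    have h2 : ∀ s, B.indicator (1 : ℝ × X → ℝ≥0∞) (s, x) ≤
        (Ioo (ρ x - δ x / Λ) (ρ x)).indicator 1 s := by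
      intro s
      by_cases hsx : (s, x) ∈ B
      · rw [indicator_of_mem hsx, indicator_of_mem]
        · rfl
        · refine ⟨?_, hsx.1⟩
          have h3 : Λ * (ρ x - s) < δ x := hsx.2.2
          have h4 : ρ x - s < δ x / Λ := by
            rw [lt_div_iff₀ hΛ]; linarith
          linarith
      · rw [indicator_of_notMem hsx]; exact zero_le
    calc ∫⁻ s in I, B.indicator 1 (s, x)
        ≤ ∫⁻ s, B.indicator 1 (s, x) := setLIntegral_le_lintegral _ _
      _ ≤ ∫⁻ s, (Ioo (ρ x - δ x / Λ) (ρ x)).indicator 1 s := lintegral_mono h2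
      _ = ENNReal.ofReal (δ x / Λ) := by
        rw [lintegral_indicator_one measurableSet_Ioo, Real.volume_Ioo]
        congr 1; ring
  have hlav : F s ≤ 2 * ∫⁻ x in T, ENNReal.ofReal (δ x / Λ) ∂μ := by
    refine hs.trans ?_
    rw [setLAverage_eq, hIv, ENNReal.div_eq_inv_mul]
    gcongr
    rw [← ENNReal.ofReal_inv_of_pos (by norm_num)]
    norm_num
  calc ENNReal.ofReal Λ * F s
      ≤ ENNReal.ofReal Λ * (2 * ∫⁻ x in T, ENNReal.ofReal (δ x / Λ) ∂μ) := by gcongr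
    _ = 2 * (ENNReal.ofReal Λ * ∫⁻ x in T, ENNReal.ofReal (δ x / Λ) ∂μ) := by ring
    _ = 2 * ∫⁻ x in T, ENNReal.ofReal (δ x) ∂μ := by
        rw [← lintegral_const_mul' _ _ ENNReal.ofReal_ne_top]
        congr 1
        refine lintegral_congr fun x => ?_
        rw [← ENNReal.ofReal_mul hΛ.le]
        congr 1
        field_simp

/-- Gluing of two locally Lipschitz functions along a transition layer. -/
theorem exists_glue {X : Type u} [PseudoMetricSpace X] [ProperSpace X] [MeasurableSpace X]
    [BorelSpace X] {μ : Measure X} [SigmaFinite μ] {u v : X → ℝ} {W W' : Set X}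
    (hW : IsOpen W) (hW' : IsOpen W') (hu : LocallyLipschitzOnSet u W)
    (hv : LocallyLipschitzOnSet v W') {ρ : X → ℝ} {L : ℝ≥0} (hρ : LipschitzWith L ρ)
    (hρW : ∀ x, 0 ≤ ρ x → x ∈ W) (hρW' : ∀ x, ρ x ≤ 1 → x ∈ W')
    (hT : Bornology.IsBounded {x | 0 ≤ ρ x ∧ ρ x ≤ 1}) :
    ∃ h : X → ℝ, LocallyLipschitzOnSet h univ ∧ (∀ x, ρ x ≤ 0 → h x = v x) ∧
      (∀ x, 1 ≤ ρ x → h x = u x) ∧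
      (∀ x, 0 ≤ ρ x → ρ x ≤ 1 → ∀ a, |h x - a| ≤ |u x - a| + |v x - a|) ∧
      ∫⁻ x, lipConst h x ∂μ ≤ ∫⁻ x in W, lipConst u x ∂μ + ∫⁻ x in W', lipConst v x ∂μ +
        2 * L * ∫⁻ x in {x | 0 ≤ ρ x ∧ ρ x ≤ 1}, ENNReal.ofReal |u x - v x| ∂μ := by
  set T : Set X := {x | 0 ≤ ρ x ∧ ρ x ≤ 1} with hTdef
  have hρc := hρ.continuous
  have hTc : IsClosed T := (isClosed_le continuous_const hρc).inter
    (isClosed_le hρc continuous_const)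
  have hTW : T ⊆ W := fun x hx => hρW x hx.1
  have hTW' : T ⊆ W' := fun x hx => hρW' x hx.2
  obtain ⟨Lu, hLu⟩ := hu T hTc hT hTW
  obtain ⟨Lv, hLv⟩ := hv T hTc hT hTW'
  obtain ⟨U, hU, hUu⟩ := hLu.extend_real
  obtain ⟨V, hV, hVv⟩ := hLv.extend_real
  have hUc := hU.continuous
  have hVc := hV.continuous
  set δ : X → ℝ := fun x => |U x - V x| with hδ
  have hδc : Continuous δ := by fun_prop
  obtain ⟨M, hM0, hM⟩ : ∃ M : ℝ, 0 ≤ M ∧ ∀ x ∈ T, δ x ≤ M := by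
    obtain ⟨M, hM⟩ := (isCompact_of_isClosed_isBounded hTc hT).exists_bound_of_continuousOn
      hδc.continuousOn
    exact ⟨max M 0, le_max_right _ _, fun x hx =>
      (le_abs_self _).trans ((hM x hx).trans (le_max_left _ _))⟩
  set Λ : ℝ := 4 * M + 4 with hΛdef
  have hΛ : 0 < Λ := by positivity
  obtain ⟨s, hs, hs1, hs2, hs3⟩ := exists_level (μ := μ) hρc.measurable hδc.measurable hΛ
  set ψ : X → ℝ := fun x => Λ * max (ρ x - s) 0 with hψ
  have hψ0 : ∀ x, 0 ≤ ψ x := fun x => by positivity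
  have hψlip : ∀ x y, |ψ y - ψ x| ≤ Λ * L * dist y x := by
    intro x y
    have h1 := abs_max_sub_max_le_abs (ρ y - s) (ρ x - s) 0
    have h2 := hρ.dist_le_mul y x
    rw [Real.dist_eq] at h2
    have h3 : |ψ y - ψ x| = Λ * |max (ρ y - s) 0 - max (ρ x - s) 0| := by
      rw [hψ, ← mul_sub, abs_mul, abs_of_pos hΛ]
    rw [h3, mul_assoc]
    gcongr
    refine h1.trans ?_
    rw [sub_sub_sub_cancel_right]
    exact h2
  have hψc : Continuous ψ := by fun_prop
  set g : X → ℝ := fun x => clampAround (U x) (V x) (ψ x) with hg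
  set h : X → ℝ := fun x => if ρ x ≤ 0 then v x else if 1 ≤ ρ x then u x else g x with hh
  have e1 : ∀ x, ρ x ≤ s → h x = v x := by
    intro x hx
    simp only [hh]
    split_ifs with c1 c2
    · rfl
    · linarith [hs.2]
    · have : ψ x = 0 := by simp only [hψ]; rw [max_eq_right (by linarith), mul_zero]
      simp only [hg, this, clampAround_zero]
      exact (hVv ⟨(not_le.1 c1).le, (not_le.1 c2).le⟩).symm
  have eg : ∀ x, 0 < ρ x → ρ x < 1 → h x = g x := by
    intro x h1 h2
    simp only [hh]
    rw [if_neg h1.not_ge, if_neg h2.not_ge]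
  have egu : ∀ x, 0 < ρ x → (3 / 4 < ρ x ∨ δ x ≤ ψ x) → h x = u x := by
    intro x h0 hx
    by_cases c2 : 1 ≤ ρ x
    · simp only [hh]
      rw [if_neg h0.not_ge, if_pos c2]
    · have hxT : x ∈ T := ⟨h0.le, (not_le.1 c2).le⟩
      rw [eg x h0 (not_le.1 c2)]
      have : δ x ≤ ψ x := by
        rcases hx with hx | hx
        · have h1 : (1:ℝ) / 4 ≤ max (ρ x - s) 0 := le_max_of_le_left (by linarith [hs.2])
          have h2 : Λ * (1 / 4) ≤ ψ x := by simp only [hψ]; gcongr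
          have := hM x hxT
          rw [hΛdef] at h2
          linarith
        · exact hx
      simp only [hg]
      rw [clampAround_of_abs_le this]
      exact (hUu hxT).symm
  have n1 : ∀ x, ρ x < s → h =ᶠ[𝓝 x] v := fun x hx => by
    filter_upwards [hρc.continuousAt.eventually_lt_const hx] with y hy using e1 y hy.le
  have n2 : ∀ x, 0 < ρ x → (3 / 4 < ρ x ∨ δ x < ψ x) → h =ᶠ[𝓝 x] u := fun x hx0 hx => by
    have a1 := hρc.continuousAt.eventually_const_lt hx0
    rcases hx with hx | hx
    · filter_upwards [a1, hρc.continuousAt.eventually_const_lt hx] with y hy hy' using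
        egu y hy (Or.inl hy')
    · filter_upwards [a1, hδc.continuousAt.eventually_lt hψc.continuousAt hx] with y hy hy' using
        egu y hy (Or.inr hy'.le)
  have n3 : ∀ x, 0 < ρ x → ρ x < 1 → h =ᶠ[𝓝 x] g := fun x h0 h1 => by
    filter_upwards [hρc.continuousAt.eventually_const_lt h0,
      hρc.continuousAt.eventually_lt_const h1] with y hy hy' using eg y hy hy'
  refine ⟨h, ?_, fun x hx => e1 x (hx.trans hs.1.le), fun x hx =>
    egu x (by linarith) (Or.inl (by linarith)), ?_, ?_⟩
  · have transfer : ∀ x (k : X → ℝ), h =ᶠ[𝓝 x] k →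
        (∃ C : ℝ≥0, ∃ t ∈ 𝓝 x, LipschitzOnWith C k t) →
        ∃ C : ℝ≥0, ∃ t ∈ 𝓝 x, LipschitzOnWith C h t := by
      rintro x k hk ⟨C, t, ht, hC⟩
      refine ⟨C, t ∩ {y | h y = k y}, inter_mem ht hk, ?_⟩
      intro y hy z hz
      rw [show h y = k y from hy.2, show h z = k z from hz.2]
      exact hC hy.1 hz.1
    refine locallyLipschitzOnSet_of_exists_mem_nhds fun x _ => ?_
    by_cases c1 : ρ x < s
    · exact transfer x v (n1 x c1) (hv.exists_mem_nhds hW' (hρW' x (by linarith [hs.2])))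
    by_cases c2 : 3 / 4 < ρ x
    · exact transfer x u (n2 x (by linarith) (Or.inl c2))
        (hu.exists_mem_nhds hW (hρW x (by linarith)))
    · refine transfer x g (n3 x (by linarith [hs.1]) (by linarith)) ?_
      have hψL : LipschitzWith (Real.toNNReal Λ * L) ψ := by
        refine LipschitzWith.of_dist_le_mul fun x y => ?_
        rw [Real.dist_eq]
        simpa [Real.coe_toNNReal _ hΛ.le] using hψlip y x
      exact ⟨_, univ, univ_mem, ((hV.sub hψL).max (hU.min (hV.add hψL))).lipschitzOnWith⟩
  · intro x h0 h1 a
    have hxT : x ∈ T := ⟨h0, h1⟩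
    simp only [hh]
    split_ifs with c1 c2
    · linarith [abs_nonneg (u x - a)]
    · linarith [abs_nonneg (v x - a)]
    · rw [hUu hxT, hVv hxT]
      exact abs_clampAround_sub_le (hψ0 x) a
  · set B : Set X := {x | s < ρ x ∧ ρ x ≤ 3 / 4 ∧ Λ * (ρ x - s) < δ x} with hB
    set G : Set X := {x | s ≤ ρ x ∧ (3 / 4 < ρ x ∨ δ x < ψ x)} with hG
    have hGm : MeasurableSet G :=
      (measurableSet_le measurable_const hρc.measurable).inter
        ((measurableSet_lt measurable_const hρc.measurable).union
          (measurableSet_lt hδc.measurable hψc.measurable))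
    have hBm : MeasurableSet B :=
      (measurableSet_lt measurable_const hρc.measurable).inter
        ((measurableSet_le hρc.measurable measurable_const).inter
          (measurableSet_lt ((hρc.measurable.sub_const s).const_mul Λ) hδc.measurable))
    have hGW : G ⊆ W := fun x hx => hρW x (by linarith [hx.1, hs.1])
    have hGW' : Gᶜ ⊆ W' := by
      intro x hx
      refine hρW' x ?_
      by_contra hcon
      exact hx ⟨by linarith [hs.2], Or.inl (by linarith)⟩
    have i1 : ∫⁻ x in G, lipConst h x ∂μ ≤ ∫⁻ x in W, lipConst u x ∂μ := by
      refine le_trans ?_ (lintegral_mono_set hGW)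
      refine setLIntegral_mono' hGm fun x hx => ?_
      exact lipConst_le_of_eventuallyEq (n2 x (hs.1.trans_le hx.1) hx.2)
    have i2 : ∫⁻ x in Gᶜ, lipConst h x ∂μ ≤
        ∫⁻ x in W', lipConst v x ∂μ + ENNReal.ofReal (Λ * L) * μ B := by
      have hae : ∀ᵐ x ∂μ, ρ x ≠ s ∧ ρ x - δ x / Λ ≠ s := by
        rw [eventually_and]
        exact ⟨by simpa [ae_iff] using hs1, by simpa [ae_iff] using hs2⟩
      have hpt : ∀ᵐ x ∂μ, x ∈ Gᶜ → lipConst h x ≤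
          lipConst v x + B.indicator (fun _ => ENNReal.ofReal (Λ * L)) x := by
        filter_upwards [hae] with x hx hxG
        rcases lt_or_gt_of_ne hx.1 with c1 | c1
        · exact (lipConst_le_of_eventuallyEq (n1 x c1)).trans le_self_add
        · have c2 : ρ x ≤ 3 / 4 := by
            by_contra hcon
            exact hxG ⟨c1.le, Or.inl (by linarith)⟩
          have c3 : ψ x ≤ δ x := by
            by_contra hcon
            exact hxG ⟨c1.le, Or.inr (by linarith)⟩
          have hψx : ψ x = Λ * (ρ x - s) := by
            simp only [hψ]; rw [max_eq_left (by linarith)]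
          have c4 : ψ x < δ x := by
            refine lt_of_le_of_ne c3 fun heq => hx.2 ?_
            rw [← heq, hψx]
            field_simp
            ring
          have hxB : x ∈ B := ⟨c1, c2, by rw [← hψx]; exact c4⟩
          rw [indicator_of_mem hxB]
          refine lipConst_le_add (by positivity) ?_
          have hx0 : 0 < ρ x := hs.1.trans c1
          have hTn : ∀ᶠ y in 𝓝 x, V y = v y := by
            filter_upwards [hρc.continuousAt.eventually_const_lt hx0,
              hρc.continuousAt.eventually_lt_const (show ρ x < 1 by linarith)] with y hy hy'
            exact (hVv ⟨hy.le, hy'.le⟩).symm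
          have hgx := n3 x hx0 (by linarith)
          have hlt := lt_abs.1 c4
          have key : (∀ᶠ y in 𝓝 x, g y = V y + ψ y) ∨ (∀ᶠ y in 𝓝 x, g y = V y - ψ y) := by
            rcases hlt with hlt | hlt
            · left
              filter_upwards [hψc.continuousAt.eventually_lt (hUc.sub hVc).continuousAt hlt]
                with y hy using clampAround_of_le_sub (hψ0 y) hy.le
            · right
              filter_upwards [hψc.continuousAt.eventually_lt (hUc.sub hVc).neg.continuousAt hlt]
                with y hy
              refine clampAround_of_le_sub' (hψ0 y) ?_
              have : ψ y < -(U y - V y) := hy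
              linarith
          rcases key with key | key
          · filter_upwards [hTn, hgx, key] with y hy1 hy2 hy3
            rw [hy2, hgx.eq_of_nhds, hy3, key.self_of_nhds, hy1, hTn.self_of_nhds]
            calc |v y + ψ y - (v x + ψ x)| = |(v y - v x) + (ψ y - ψ x)| := by ring_nf
              _ ≤ |v y - v x| + |ψ y - ψ x| := abs_add_le _ _
              _ ≤ _ := by gcongr; exact hψlip x y
          · filter_upwards [hTn, hgx, key] with y hy1 hy2 hy3
            rw [hy2, hgx.eq_of_nhds, hy3, key.self_of_nhds, hy1, hTn.self_of_nhds]
            calc |v y - ψ y - (v x - ψ x)| = |(v y - v x) - (ψ y - ψ x)| := by ring_nf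
              _ ≤ |v y - v x| + |ψ y - ψ x| := abs_sub _ _
              _ ≤ _ := by gcongr; exact hψlip x y
      calc ∫⁻ x in Gᶜ, lipConst h x ∂μ
          ≤ ∫⁻ x in Gᶜ, (lipConst v x + B.indicator (fun _ => ENNReal.ofReal (Λ * L)) x) ∂μ :=
            setLIntegral_mono_ae' hGm.compl hpt
        _ = ∫⁻ x in Gᶜ, lipConst v x ∂μ +
            ∫⁻ x in Gᶜ, B.indicator (fun _ => ENNReal.ofReal (Λ * L)) x ∂μ :=
            lintegral_add_right _ (measurable_const.indicator hBm)
        _ ≤ ∫⁻ x in W', lipConst v x ∂μ +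
            ∫⁻ x, B.indicator (fun _ => ENNReal.ofReal (Λ * L)) x ∂μ := by
            gcongr
            exact Measure.restrict_le_self
        _ = _ := by rw [lintegral_indicator_const hBm]
    have i3 : ENNReal.ofReal (Λ * L) * μ B ≤
        2 * L * ∫⁻ x in T, ENNReal.ofReal |u x - v x| ∂μ := by
      have e : ∫⁻ x in T, ENNReal.ofReal |u x - v x| ∂μ = ∫⁻ x in T, ENNReal.ofReal (δ x) ∂μ :=
        setLIntegral_congr_fun hTc.measurableSet fun x hx => by
          simp only [hδ, hUu hx, hVv hx]
      rw [e, ENNReal.ofReal_mul hΛ.le, ENNReal.ofReal_coe_nnreal]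
      calc ENNReal.ofReal Λ * L * μ B = L * (ENNReal.ofReal Λ * μ B) := by ring
        _ ≤ L * (2 * ∫⁻ x in T, ENNReal.ofReal (δ x) ∂μ) := by gcongr
        _ = _ := by ring
    calc ∫⁻ x, lipConst h x ∂μ
        = ∫⁻ x in G, lipConst h x ∂μ + ∫⁻ x in Gᶜ, lipConst h x ∂μ :=
          (lintegral_add_compl _ hGm).symm
      _ ≤ _ := by
          rw [add_assoc]
          exact add_le_add i1 (i2.trans (by gcongr))

section GlueBV

variable {X : Type u} [PseudoMetricSpace X] [MeasurableSpace X] [BorelSpace X] {μ : Measure X}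
  {f u v h : X → ℝ} {W S : Set X}

theorem aemeasurable_ofReal_abs_sub (hf : AEMeasurable f μ) (hW : IsOpen W)
    (hu : LocallyLipschitzOnSet u W) (hS : MeasurableSet S) (hSW : S ⊆ W) :
    AEMeasurable (fun x => ENNReal.ofReal |u x - f x|) (μ.restrict S) := by
  have h1 : AEMeasurable u (μ.restrict S) :=
    ((hu.continuousOn hW).mono hSW).aemeasurable hS
  have h2 : AEMeasurable (fun x => u x - f x) (μ.restrict S) := h1.sub hf.restrict
  exact (h2.norm).ennreal_ofReal

theorem setLIntegral_le_add_of_abs_le {p : X → ℝ} (hf : AEMeasurable f μ) (hW : IsOpen W)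
    (hu : LocallyLipschitzOnSet u W) (hS : MeasurableSet S) (hSW : S ⊆ W)
    (hp : ∀ x ∈ S, |p x| ≤ |u x - f x| + |v x - f x|) :
    ∫⁻ x in S, ENNReal.ofReal |p x| ∂μ ≤
      ∫⁻ x in S, ENNReal.ofReal |u x - f x| ∂μ + ∫⁻ x in S, ENNReal.ofReal |v x - f x| ∂μ := by
  rw [← lintegral_add_left' (aemeasurable_ofReal_abs_sub hf hW hu hS hSW)]
  refine setLIntegral_mono' hS fun x hx => ?_
  rw [← ENNReal.ofReal_add (abs_nonneg _) (abs_nonneg _)]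
  exact ENNReal.ofReal_le_ofReal (hp x hx)

end GlueBV

/-- Subadditivity of the total variation: compact inner set. -/
theorem totVarOn_univ_le_add_compl {X : Type u} [PseudoMetricSpace X] [ProperSpace X]
    [MeasurableSpace X] [BorelSpace X] {μ : Measure X} [SigmaFinite μ] {f : X → ℝ}
    (hf : AEMeasurable f μ) {F W : Set X} (hF : IsCompact F) (hFc : IsClosed F) (hW : IsOpen W)
    (hFW : F ⊆ W) :
    totVarOn μ f univ ≤ totVarOn μ f W + totVarOn μ f Fᶜ := by
  rcases F.eq_empty_or_nonempty with rfl | hFne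
  · simp
  by_cases hV1 : totVarOn μ f W = ⊤
  · simp [hV1]
  by_cases hV2 : totVarOn μ f Fᶜ = ⊤
  · simp [hV2]
  obtain ⟨x0, hx0⟩ := hFne
  obtain ⟨δ, hδ, hδW⟩ := hF.exists_cthickening_subset_open hW hFW
  set L : ℝ≥0 := ⟨3 / δ, by positivity⟩ with hL
  set ρ : X → ℝ := fun x => 2 - 3 / δ * infDist x F with hρdef
  have hρ : LipschitzWith L ρ := by
    refine LipschitzWith.of_dist_le_mul fun x y => ?_
    have h1 := (lipschitz_infDist_pt F).dist_le_mul x y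
    rw [Real.dist_eq] at h1 ⊢
    have h2 : ρ x - ρ y = -(3 / δ * (infDist x F - infDist y F)) := by
      simp only [hρdef]; ring
    rw [h2, abs_neg, abs_mul, abs_of_pos (by positivity)]
    simp only [NNReal.coe_one, one_mul] at h1
    change 3 / δ * _ ≤ 3 / δ * _
    gcongr
  have hT0 : ∀ x, 0 ≤ ρ x → x ∈ cthickening δ F := by
    intro x hx
    have h1 : infDist x F ≤ δ := by
      have h2 : 3 / δ * infDist x F ≤ 2 := by simp only [hρdef] at hx; linarith
      have h3 : infDist x F ≤ 2 * δ / 3 := by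
        rw [le_div_iff₀ (by norm_num)]
        calc infDist x F * 3 = δ * (3 / δ * infDist x F) := by field_simp
          _ ≤ δ * 2 := by gcongr
          _ = 2 * δ := mul_comm _ _
      linarith
    rw [mem_cthickening_iff, ← ENNReal.ofReal_toReal (infEDist_ne_top ⟨x0, hx0⟩)]
    exact ENNReal.ofReal_le_ofReal h1
  have hρW : ∀ x, 0 ≤ ρ x → x ∈ W := fun x hx => hδW (hT0 x hx)
  have hρW' : ∀ x, ρ x ≤ 1 → x ∈ Fᶜ := by
    intro x hx hxF
    simp only [hρdef, infDist_zero_of_mem hxF] at hx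
    linarith
  have hbdd : Bornology.IsBounded {x | 0 ≤ ρ x} :=
    (hF.isBounded.cthickening (δ := δ)).subset hT0
  have hc0 : IsClosed {x | 0 ≤ ρ x} := isClosed_le continuous_const hρ.continuous
  have hc1 : IsClosed {x | ρ x ≤ 1} := isClosed_le hρ.continuous continuous_const
  refine totVarOn_univ_le_of_exists x0 fun R ε hR hε => ?_
  obtain ⟨R', hR'⟩ := hbdd.subset_closedBall x0
  set η : ℝ := ε / (4 * L + 4) with hη
  have hη0 : 0 < η := by positivity
  obtain ⟨u, hu, hu1, hu2⟩ := exists_approx hV1 hc0 hbdd hρW hη0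
  obtain ⟨v, hv, hv1, hv2⟩ := exists_approx hV2 (K := {x | ρ x ≤ 1} ∩ closedBall x0 (max R R'))
    (hc1.inter isClosed_closedBall) (isBounded_closedBall.subset inter_subset_right)
    (fun x hx => hρW' x hx.1) hη0
  obtain ⟨h, hh, hh0, hh1, hhT, hhl⟩ := exists_glue (μ := μ) hW hFc.isOpen_compl hu hv hρ hρW hρW'
    (hbdd.subset fun x hx => hx.1)
  set T : Set X := {x | 0 ≤ ρ x ∧ ρ x ≤ 1} with hT
  have hTc : IsClosed T := hc0.inter hc1
  have hTK : T ⊆ {x | ρ x ≤ 1} ∩ closedBall x0 (max R R') := fun x hx =>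
    ⟨hx.2, closedBall_subset_closedBall (le_max_right _ _) (hR' hx.1)⟩
  have iT : ∀ p : X → ℝ, (∀ x ∈ T, |p x| ≤ |u x - f x| + |v x - f x|) →
      ∫⁻ x in T, ENNReal.ofReal |p x| ∂μ ≤ ENNReal.ofReal η + ENNReal.ofReal η := by
    intro p hp
    refine (setLIntegral_le_add_of_abs_le hf hW hu hTc.measurableSet
      (fun x hx => hρW x hx.1) hp).trans ?_
    gcongr
    · exact (lintegral_mono_set fun x hx => hx.1).trans hu1
    · exact (lintegral_mono_set hTK).trans hv1
  refine ⟨h, hh, ?_, ?_⟩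
  · have hcov : closedBall x0 R ⊆ {x | 1 ≤ ρ x} ∪ (T ∪ {x | ρ x ≤ 0} ∩ closedBall x0 R) := by
      intro x hx
      by_cases c1 : 1 ≤ ρ x
      · exact Or.inl c1
      by_cases c2 : ρ x ≤ 0
      · exact Or.inr (Or.inr ⟨c2, hx⟩)
      · exact Or.inr (Or.inl ⟨(not_le.1 c2).le, (not_le.1 c1).le⟩)
    have j1 : ∫⁻ x in {x | 1 ≤ ρ x}, ENNReal.ofReal |h x - f x| ∂μ ≤ ENNReal.ofReal η := by
      refine le_trans ?_ hu1
      refine le_trans ?_ (lintegral_mono_set (fun x (hx : 1 ≤ ρ x) => zero_le_one.trans hx))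
      refine setLIntegral_mono' (isClosed_le continuous_const hρ.continuous).measurableSet
        fun x hx => ?_
      rw [hh1 x hx]
    have j2 : ∫⁻ x in {x | ρ x ≤ 0} ∩ closedBall x0 R, ENNReal.ofReal |h x - f x| ∂μ ≤
        ENNReal.ofReal η := by
      refine le_trans ?_ hv1
      refine le_trans (setLIntegral_mono' (g := fun x => ENNReal.ofReal |v x - f x|)
        ((isClosed_le hρ.continuous continuous_const).inter isClosed_closedBall).measurableSet
        fun x hx => ?_) (lintegral_mono_set ?_)
      · rw [hh0 x hx.1]
      · exact fun x hx => ⟨(show ρ x ≤ 0 from hx.1).trans zero_le_one,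
          closedBall_subset_closedBall (le_max_left _ _) hx.2⟩
    have j3 := iT (fun x => h x - f x) fun x hx => hhT x hx.1 hx.2 (f x)
    calc ∫⁻ x in closedBall x0 R, ENNReal.ofReal |h x - f x| ∂μ
        ≤ _ := lintegral_mono_set hcov
      _ ≤ _ := lintegral_union_le _ _ _
      _ ≤ _ := add_le_add_right (lintegral_union_le _ _ _) _
      _ ≤ ENNReal.ofReal η + ((ENNReal.ofReal η + ENNReal.ofReal η) + ENNReal.ofReal η) := by
          gcongr
      _ ≤ ENNReal.ofReal ε := by
          rw [← ENNReal.ofReal_add hη0.le hη0.le, ← ENNReal.ofReal_add (by positivity) hη0.le,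
            ← ENNReal.ofReal_add hη0.le (by positivity)]
          refine ENNReal.ofReal_le_ofReal ?_
          have h5 : η * (4 * L + 4) = ε := by rw [hη]; field_simp
          have h6 : 0 ≤ η * L := by positivity
          linarith
  · have j3 := iT (fun x => u x - v x) fun x _ => by
      rw [abs_sub_comm (v x) (f x)]
      exact abs_sub_le _ _ _
    calc ∫⁻ x, lipConst h x ∂μ
        ≤ _ := hhl
      _ ≤ (totVarOn μ f W + ENNReal.ofReal η) + (totVarOn μ f Fᶜ + ENNReal.ofReal η) +
          2 * L * (ENNReal.ofReal η + ENNReal.ofReal η) := by gcongr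
      _ = totVarOn μ f W + totVarOn μ f Fᶜ + (ENNReal.ofReal η + ENNReal.ofReal η +
          2 * L * (ENNReal.ofReal η + ENNReal.ofReal η)) := by ring
      _ ≤ _ := by
          gcongr
          have e2 : (2 * L : ℝ≥0∞) = ENNReal.ofReal (2 * L) := by
            rw [ENNReal.ofReal_mul (by norm_num), ENNReal.ofReal_coe_nnreal]
            norm_num
          rw [e2, ← ENNReal.ofReal_add hη0.le hη0.le, ← ENNReal.ofReal_mul (by positivity),
            ← ENNReal.ofReal_add (by positivity) (by positivity)]
          refine ENNReal.ofReal_le_ofReal ?_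
          have h5 : η * (4 * L + 4) = ε := by rw [hη]; field_simp
          linarith

section Mollification

variable {X : Type u} [PseudoMetricSpace X]

/-- The tent kernel of radius `dist x x0 / 8`. -/
def tentKernel (x0 x y : X) : ℝ := max 0 (dist x x0 / 8 - dist x y)

theorem tentKernel_nonneg (x0 x y : X) : 0 ≤ tentKernel x0 x y := le_max_left _ _

theorem tentKernel_le (x0 x y : X) : tentKernel x0 x y ≤ dist x x0 / 8 :=
  max_le (by positivity) (by linarith [dist_nonneg (x := x) (y := y)])

theorem le_tentKernel (x0 x y : X) : dist x x0 / 8 - dist x y ≤ tentKernel x0 x y :=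
  le_max_right _ _

theorem tentKernel_eq_zero {x0 x y : X} (h : dist x x0 / 8 ≤ dist x y) :
    tentKernel x0 x y = 0 := max_eq_left (by linarith)

theorem abs_tentKernel_sub_le (x0 x y z : X) :
    |tentKernel x0 x z - tentKernel x0 y z| ≤ 2 * dist x y := by
  unfold tentKernel
  rw [max_comm 0, max_comm 0]
  refine (abs_max_sub_max_le_abs _ _ _).trans ?_
  have h1 := abs_dist_sub_le x y x0
  have h2 := abs_dist_sub_le x y z
  rw [abs_le] at *
  constructor <;> linarith [h1.1, h1.2, h2.1, h2.2, dist_nonneg (x := x) (y := y)]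

theorem continuous_tentKernel (x0 x : X) : Continuous (tentKernel x0 x) := by
  unfold tentKernel
  fun_prop

variable [MeasurableSpace X]

/-- Mollification of `f` at the scale of the distance to `x0`. -/
def tentAverage (μ : Measure X) (f : X → ℝ) (x0 x : X) : ℝ :=
  (∫ y, tentKernel x0 x y * f y ∂μ) / ∫ y, tentKernel x0 x y ∂μ

/-- The constant in the estimates for `tentAverage`. -/
def tentConst (Cd : ℝ≥0) : ℝ := 50 * Cd ^ 6 * (1 + 6 * Cd ^ 7)

theorem tentConst_nonneg (Cd : ℝ≥0) : 0 ≤ tentConst Cd := by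
  unfold tentConst; positivity

variable [BorelSpace X] {μ : Measure X} {Cd : ℝ≥0} {f : X → ℝ} {x0 p : X}

theorem integral_tentKernel_ge (h : IsDoublingWith μ Cd) (hC : 1 ≤ Cd) (hp : 0 < dist p x0) {z : X}
    (hz : dist z p < dist p x0 / 32) :
    3 * dist p x0 / 64 * μ.real (ball x0 (dist p x0)) / Cd ^ 6 ≤ ∫ y, tentKernel x0 z y ∂μ := by
  set a := dist p x0 with ha
  have h1 := abs_le.1 (abs_dist_sub_le z p x0)
  have hfin := h.measure_ball_lt_top hC
  have hint : Integrable (tentKernel x0 z) μ := by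
    have hb : IntegrableOn (tentKernel x0 z) (ball z a) μ := by
      refine Measure.integrableOn_of_bounded (M := dist z x0 / 8) (hfin z a).ne
        (continuous_tentKernel x0 z).aestronglyMeasurable (Eventually.of_forall fun y => ?_)
      rw [Real.norm_of_nonneg (tentKernel_nonneg _ _ _)]
      exact tentKernel_le _ _ _
    refine (integrableOn_iff_integrable_of_support_subset fun y hy => ?_).1 hb
    by_contra hcon
    refine hy (tentKernel_eq_zero ?_)
    rw [mem_ball, not_lt, dist_comm] at hcon
    linarith
  have hball : μ.real (ball x0 a) ≤ (Cd:ℝ) ^ 6 * μ.real (ball z (3 * a / 64)) := by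
    refine le_trans ?_ (h.measureReal_ball_pow_le hC z (by positivity) 6)
    refine measureReal_mono ?_ (hfin _ _).ne
    refine ball_subset_ball' ?_
    rw [dist_comm]
    linarith
  have hCd : (0:ℝ) < Cd ^ 6 := by
    have : (0:ℝ) < Cd := lt_of_lt_of_le one_pos (by exact_mod_cast hC)
    positivity
  calc 3 * a / 64 * μ.real (ball x0 a) / Cd ^ 6
      ≤ μ.real (ball z (3 * a / 64)) * (3 * a / 64) := by
        rw [div_le_iff₀ hCd]
        nlinarith
    _ = ∫ y, (ball z (3 * a / 64)).indicator (fun _ => 3 * a / 64) y ∂μ := by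
        rw [integral_indicator_const _ measurableSet_ball, smul_eq_mul]
    _ ≤ _ := by
        refine integral_mono ((integrable_indicator_iff measurableSet_ball).2
          (integrableOn_const (hfin _ _).ne)) hint fun y => ?_
        refine indicator_le' (g := tentKernel x0 z) (fun y hy => ?_)
          (fun y _ => tentKernel_nonneg _ _ _) y
        rw [mem_ball, dist_comm] at hy
        linarith [le_tentKernel x0 z y]

theorem tentAverage_estimates (h : IsDoublingWith μ Cd) (hC : 1 ≤ Cd) (hp : 0 < dist p x0)
    (hf : IntegrableOn f (ball p (dist p x0 / 4)) μ) (c : ℝ) {I : ℝ}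
    (hI : ∫ y in ball p (dist p x0 / 4), |f y - c| ∂μ ≤ I) :
    (∀ z ∈ ball p (dist p x0 / 32),
      |tentAverage μ f x0 z - c| ≤ tentConst Cd * I / μ.real (ball x0 (dist p x0))) ∧
    (∀ z ∈ ball p (dist p x0 / 32), ∀ y ∈ ball p (dist p x0 / 32),
      |tentAverage μ f x0 z - tentAverage μ f x0 y| ≤
        tentConst Cd * I / (dist p x0 * μ.real (ball x0 (dist p x0))) * dist z y) := by
  have hfin := h.measure_ball_lt_top hC
  set a := dist p x0 with ha
  set A := ball p (a / 4) with hA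
  set m := μ.real (ball x0 a) with hm
  have hm0 : 0 < m := h.measureReal_ball_pos hC x0 hp
  have hI0 : 0 ≤ I := le_trans (integral_nonneg fun _ => abs_nonneg _) hI
  have hCd1 : (1:ℝ) ≤ Cd := by exact_mod_cast hC
  have hCd0 : (0:ℝ) < Cd := by linarith
  set σ := 3 * a / 64 * m / Cd ^ 6 with hσ
  have hσ0 : 0 < σ := by positivity
  have hdist : ∀ z ∈ ball p (a / 32), |dist z x0 - a| < a / 32 := fun z hz =>
    (abs_dist_sub_le z p x0).trans_lt hz
  have hsupp : ∀ z ∈ ball p (a / 32), ∀ y, y ∉ A → tentKernel x0 z y = 0 := by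
    intro z hz y hy
    refine tentKernel_eq_zero ?_
    have h1 := abs_lt.1 (hdist z hz)
    rw [hA, mem_ball, not_lt] at hy
    rw [mem_ball] at hz
    have h2 := dist_triangle y z p
    rw [dist_comm y z] at h2
    linarith
  have hfinA : IsFiniteMeasure (μ.restrict A) := ⟨by simpa using hfin p (a / 4)⟩
  have hKint : ∀ z, Integrable (tentKernel x0 z) (μ.restrict A) := fun z =>
    Integrable.of_bound (C := dist z x0 / 8) (continuous_tentKernel x0 z).aestronglyMeasurable
      (Eventually.of_forall fun y => by
        rw [Real.norm_of_nonneg (tentKernel_nonneg _ _ _)]; exact tentKernel_le _ _ _)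
  have hKfint : ∀ g : X → ℝ, Integrable g (μ.restrict A) → ∀ z,
      Integrable (fun y => tentKernel x0 z y * g y) (μ.restrict A) := fun g hg z =>
    hg.bdd_mul (c := dist z x0 / 8) (continuous_tentKernel x0 z).aestronglyMeasurable
      (Eventually.of_forall fun y => by
        rw [Real.norm_of_nonneg (tentKernel_nonneg _ _ _)]; exact tentKernel_le _ _ _)
  have hfc : Integrable (fun y => f y - c) (μ.restrict A) := hf.sub (integrable_const c)
  set S : X → ℝ := fun z => ∫ y in A, tentKernel x0 z y ∂μ with hS
  set P : X → ℝ := fun z => ∫ y in A, tentKernel x0 z y * (f y - c) ∂μ with hP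
  have hSeq : ∀ z ∈ ball p (a / 32), ∫ y, tentKernel x0 z y ∂μ = S z := fun z hz =>
    (setIntegral_eq_integral_of_forall_compl_eq_zero fun y hy => hsupp z hz y hy).symm
  have hSge : ∀ z ∈ ball p (a / 32), σ ≤ S z := fun z hz => by
    rw [← hSeq z hz]
    exact integral_tentKernel_ge h hC hp hz
  have hw : ∀ z ∈ ball p (a / 32), tentAverage μ f x0 z - c = P z / S z := by
    intro z hz
    have hSz := hσ0.trans_le (hSge z hz)
    have e1 : ∫ y, tentKernel x0 z y * f y ∂μ = ∫ y in A, tentKernel x0 z y * f y ∂μ :=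
      (setIntegral_eq_integral_of_forall_compl_eq_zero fun y hy => by
        rw [hsupp z hz y hy, zero_mul]).symm
    have e2 : P z = (∫ y in A, tentKernel x0 z y * f y ∂μ) - c * S z := by
      simp only [hP, hS, mul_sub]
      rw [integral_sub (hKfint f hf z) ((hKint z).mul_const c), integral_mul_const, mul_comm c]
    unfold tentAverage
    rw [e1, hSeq z hz, e2]
    field_simp
  have hPle : ∀ z ∈ ball p (a / 32), |P z| ≤ a / 4 * I := by
    intro z hz
    have h1 := abs_lt.1 (hdist z hz)
    calc |P z| ≤ ∫ y in A, a / 4 * |f y - c| ∂μ := by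
          rw [← Real.norm_eq_abs]
          refine norm_integral_le_of_norm_le (hfc.abs.const_mul _) (Eventually.of_forall fun y => ?_)
          rw [norm_mul, Real.norm_of_nonneg (tentKernel_nonneg _ _ _), Real.norm_eq_abs]
          gcongr
          linarith [tentKernel_le x0 z y]
      _ = a / 4 * ∫ y in A, |f y - c| ∂μ := integral_const_mul _ _
      _ ≤ _ := by gcongr
  have hPsub : ∀ z y, |P z - P y| ≤ 2 * dist z y * I := by
    intro z y
    calc |P z - P y| = |∫ t in A, (tentKernel x0 z t - tentKernel x0 y t) * (f t - c) ∂μ| := by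
          simp only [hP, sub_mul]
          rw [integral_sub (hKfint _ hfc z) (hKfint _ hfc y)]
      _ ≤ ∫ t in A, 2 * dist z y * |f t - c| ∂μ := by
          rw [← Real.norm_eq_abs]
          refine norm_integral_le_of_norm_le (hfc.abs.const_mul _) (Eventually.of_forall fun t => ?_)
          rw [norm_mul, Real.norm_eq_abs, Real.norm_eq_abs]
          gcongr
          exact abs_tentKernel_sub_le _ _ _ _
      _ = 2 * dist z y * ∫ t in A, |f t - c| ∂μ := integral_const_mul _ _
      _ ≤ _ := by gcongr
  have hAm : μ.real A ≤ Cd * m := by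
    have h1 := h.measureReal_ball_pow_le hC x0 hp 1
    rw [pow_one, pow_one] at h1
    refine le_trans (measureReal_mono ?_ (hfin _ _).ne) h1
    refine ball_subset_ball' ?_
    rw [← ha]; linarith
  have hSsub : ∀ z y, |S z - S y| ≤ 2 * dist z y * (Cd * m) := by
    intro z y
    calc |S z - S y| = |∫ t in A, (tentKernel x0 z t - tentKernel x0 y t) ∂μ| := by
          simp only [hS]
          rw [integral_sub (hKint z) (hKint y)]
      _ ≤ ∫ t in A, 2 * dist z y ∂μ := by
          rw [← Real.norm_eq_abs]
          refine norm_integral_le_of_norm_le (integrable_const _) (Eventually.of_forall fun t => ?_)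
          exact abs_tentKernel_sub_le _ _ _ _
      _ = 2 * dist z y * μ.real A := by
          rw [setIntegral_const, smul_eq_mul, mul_comm]
      _ ≤ _ := by gcongr
  have hσinv : 1 / σ = 64 * Cd ^ 6 / (3 * a * m) := by
    rw [hσ]; field_simp
  refine ⟨fun z hz => ?_, fun z hz y hy => ?_⟩
  · rw [hw z hz, abs_div]
    have hSz := hSge z hz
    rw [abs_of_pos (hσ0.trans_le hSz)]
    calc |P z| / S z ≤ (a / 4 * I) / σ := by
          gcongr
          exact hPle z hz
      _ = (16 / 3) * Cd ^ 6 * (I / m) := by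
          rw [div_eq_mul_one_div, hσinv]; field_simp; ring
      _ ≤ tentConst Cd * (I / m) := by
          gcongr
          unfold tentConst
          have : (0:ℝ) ≤ Cd ^ 6 := by positivity
          have : (0:ℝ) ≤ Cd ^ 6 * Cd ^ 7 := by positivity
          nlinarith
      _ = _ := by ring
  · have hSz := hSge z hz
    have hSy := hSge y hy
    have hSz0 := hσ0.trans_le hSz
    have hSy0 := hσ0.trans_le hSy
    have e : tentAverage μ f x0 z - tentAverage μ f x0 y =
        (P z - P y) / S z + P y * (S y - S z) / (S y * S z) := by
      have : tentAverage μ f x0 z - tentAverage μ f x0 y = P z / S z - P y / S y := by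
        rw [← hw z hz, ← hw y hy]; ring
      rw [this]
      field_simp
      ring
    rw [e]
    calc |(P z - P y) / S z + P y * (S y - S z) / (S y * S z)|
        ≤ |(P z - P y) / S z| + |P y * (S y - S z) / (S y * S z)| := abs_add_le _ _
      _ ≤ (2 * dist z y * I) / σ + (a / 4 * I) * (2 * dist z y * (Cd * m)) / (σ * σ) := by
          rw [abs_div, abs_div, abs_mul, abs_of_pos hSz0, abs_of_pos (mul_pos hSy0 hSz0)]
          gcongr
          · exact hPsub z y
          · exact hPle y hy
          · rw [dist_comm z y]; exact hSsub y z
      _ = 2 * dist z y * I * (1 / σ) * (1 + a / 4 * (Cd * m) * (1 / σ)) := by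
          field_simp
      _ = (128 / 3 * Cd ^ 6 * (1 + 16 / 3 * Cd ^ 7)) * (I / (a * m) * dist z y) := by
          rw [hσinv]; field_simp; ring
      _ ≤ tentConst Cd * (I / (a * m) * dist z y) := by
          gcongr
          unfold tentConst
          gcongr <;> norm_num
      _ = _ := by ring

end Mollification

section TentAverageBV

variable {X : Type u} [MetricSpace X] [ProperSpace X] [MeasurableSpace X] [BorelSpace X]
  {μ : Measure X} {Cd : ℝ≥0} {CP : ℝ} {f : X → ℝ} {x0 p : X} {j : ℕ}

omit [BorelSpace X] in
theorem LocallyIntegrable.integrableOn_ball (hf : LocallyIntegrable f μ) (x : X) (r : ℝ) :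
    IntegrableOn f (ball x r) μ :=
  (hf.integrableOn_isCompact (isCompact_closedBall x r)).mono_set ball_subset_closedBall

theorem exists_integral_sub_le_dyadic (h : IsDoublingWith μ Cd) (hC : 1 ≤ Cd)
    (hP : SupportsPoincare μ CP) (hCP : 0 < CP) (hf : LocallyIntegrable f μ)
    (hV : totVarOn μ f (dyadicAnnulus x0 j) ≠ ⊤) (hp : 2 ^ j ≤ dist p x0)
    (hp' : dist p x0 < 2 * 2 ^ j) {η : ℝ} (hη : 0 < η) :
    ∃ c : ℝ, ∫ y in ball p (dist p x0 / 4), |f y - c| ∂μ ≤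
      CP * (dist p x0 / 4) * ((totVarOn μ f (dyadicAnnulus x0 j)).toReal + η) := by
  set a := dist p x0 with ha
  have ha0 : 0 < a := lt_of_lt_of_le (by positivity) hp
  have hsub : closedBall p (a / 4) ⊆ dyadicAnnulus x0 j := by
    intro y hy
    rw [mem_closedBall] at hy
    have h1 := abs_le.1 ((abs_dist_sub_le y p x0).trans hy)
    rw [← ha] at h1
    constructor <;> linarith
  have hfin := h.measure_ball_lt_top hC p (a / 4)
  obtain ⟨c, hc⟩ := hP.exists_lintegral_sub_le_totVarOn hCP (isOpen_dyadicAnnulus x0 j) hV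
    (x := p) (r := a / 4) (by positivity) (h.measure_ball_pos p (by positivity)) hfin hsub
    (ε := CP * (a / 4) * η) (by positivity)
  refine ⟨c, ?_⟩
  have hfin' : IsFiniteMeasure (μ.restrict (ball p (a / 4))) := ⟨by simpa using hfin⟩
  have hint : Integrable (fun y => |f y - c|) (μ.restrict (ball p (a / 4))) :=
    ((LocallyIntegrable.integrableOn_ball hf p (a / 4)).sub (integrable_const c)).abs
  rw [← ENNReal.ofReal_le_ofReal_iff (by positivity), ofReal_integral_eq_lintegral_ofReal hint
    (Eventually.of_forall fun _ => abs_nonneg _)]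
  refine hc.trans (le_of_eq ?_)
  rw [mul_add, ENNReal.ofReal_add (by positivity) (by positivity),
    ENNReal.ofReal_mul (q := ENNReal.toReal _) (by positivity), ENNReal.ofReal_toReal hV]

theorem tentAverage_exists_lipschitzOnWith (h : IsDoublingWith μ Cd) (hC : 1 ≤ Cd)
    (hf : LocallyIntegrable f μ) (hp : 0 < dist p x0) :
    ∃ L : ℝ≥0, ∃ s ∈ 𝓝 p, LipschitzOnWith L (tentAverage μ f x0) s := by
  set C := tentConst Cd * (∫ y in ball p (dist p x0 / 4), |f y - 0| ∂μ) /
    (dist p x0 * μ.real (ball x0 (dist p x0))) with hCdef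
  have h1 := (tentAverage_estimates h hC hp (LocallyIntegrable.integrableOn_ball hf _ _) 0
    le_rfl).2
  refine ⟨Real.toNNReal C, ball p (dist p x0 / 32), ball_mem_nhds p (by positivity),
    LipschitzOnWith.of_dist_le_mul fun x hx y hy => ?_⟩
  rw [Real.dist_eq]
  refine (h1 x hx y hy).trans ?_
  gcongr
  exact Real.le_coe_toNNReal _

theorem lipConst_tentAverage_le (h : IsDoublingWith μ Cd) (hC : 1 ≤ Cd)
    (hP : SupportsPoincare μ CP) (hCP : 0 < CP) (hf : LocallyIntegrable f μ)
    (hV : totVarOn μ f (dyadicAnnulus x0 j) ≠ ⊤) (hp : 2 ^ j ≤ dist p x0)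
    (hp' : dist p x0 < 2 * 2 ^ j) :
    lipConst (tentAverage μ f x0) p ≤
      ENNReal.ofReal (tentConst Cd * CP / μ.real (ball x0 (2 ^ j)) *
        (totVarOn μ f (dyadicAnnulus x0 j)).toReal) := by
  set a := dist p x0 with ha
  have ha0 : 0 < a := lt_of_lt_of_le (by positivity) hp
  set v := (totVarOn μ f (dyadicAnnulus x0 j)).toReal with hv
  have hv0 : 0 ≤ v := ENNReal.toReal_nonneg
  set m := μ.real (ball x0 (2 ^ j)) with hm
  have hm0 : 0 < m := h.measureReal_ball_pos hC x0 (by positivity)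
  have hmm : m ≤ μ.real (ball x0 a) :=
    measureReal_mono (ball_subset_ball hp) (h.measure_ball_lt_top hC _ _).ne
  have hm1 : 0 < μ.real (ball x0 a) := hm0.trans_le hmm
  have ht := tentConst_nonneg Cd
  have key : ∀ η : ℝ, 0 < η → lipConst (tentAverage μ f x0) p ≤
      ENNReal.ofReal (tentConst Cd * CP / m * (v + η)) := by
    intro η hη
    obtain ⟨c, hc⟩ := exists_integral_sub_le_dyadic h hC hP hCP hf hV hp hp' hη
    have h1 := (tentAverage_estimates h hC ha0 (LocallyIntegrable.integrableOn_ball hf _ _) c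
      hc).2
    refine lipConst_le_of_eventually (by positivity) ?_
    filter_upwards [ball_mem_nhds p (show 0 < a / 32 by positivity)] with y hy
    refine (h1 y hy p (mem_ball_self (by positivity))).trans ?_
    gcongr
    calc tentConst Cd * (CP * (a / 4) * (v + η)) / (a * μ.real (ball x0 a))
        = tentConst Cd * CP / (4 * μ.real (ball x0 a)) * (v + η) := by field_simp
      _ ≤ tentConst Cd * CP / m * (v + η) := by
        gcongr
        linarith
  have hlim : Tendsto (fun η : ℝ => ENNReal.ofReal (tentConst Cd * CP / m * (v + η))) (𝓝[>] 0)
      (𝓝 (ENNReal.ofReal (tentConst Cd * CP / m * (v + 0)))) := by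
    refine (ENNReal.tendsto_ofReal ?_).mono_left nhdsWithin_le_nhds
    exact (by fun_prop : Continuous fun η : ℝ => tentConst Cd * CP / m * (v + η)).tendsto 0
  rw [add_zero] at hlim
  exact ge_of_tendsto hlim (by filter_upwards [self_mem_nhdsWithin] with η hη using key η hη)

/-- The half-open dyadic shell. -/
def dyadicShell (x0 : X) (j : ℕ) : Set X := {x | 2 ^ j ≤ dist x x0 ∧ dist x x0 < 2 * 2 ^ j}

omit [ProperSpace X] in
theorem measurableSet_dyadicShell (x0 : X) (j : ℕ) : MeasurableSet (dyadicShell x0 j) :=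
  (measurableSet_le measurable_const (by fun_prop : Continuous fun x => dist x x0).measurable).inter
    (measurableSet_lt (by fun_prop : Continuous fun x => dist x x0).measurable measurable_const)

theorem lintegral_dyadicShell_lipConst_tentAverage_le (h : IsDoublingWith μ Cd) (hC : 1 ≤ Cd)
    (hP : SupportsPoincare μ CP) (hCP : 0 < CP) (hf : LocallyIntegrable f μ)
    (hV : totVarOn μ f (dyadicAnnulus x0 j) ≠ ⊤) :
    ∫⁻ x in dyadicShell x0 j, lipConst (tentAverage μ f x0) x ∂μ ≤
      ENNReal.ofReal (tentConst Cd * CP * Cd) * totVarOn μ f (dyadicAnnulus x0 j) := by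
  set v := (totVarOn μ f (dyadicAnnulus x0 j)).toReal with hv
  set m := μ.real (ball x0 (2 ^ j)) with hm
  have hm0 : 0 < m := h.measureReal_ball_pos hC x0 (by positivity)
  have ht := tentConst_nonneg Cd
  calc ∫⁻ x in dyadicShell x0 j, lipConst (tentAverage μ f x0) x ∂μ
      ≤ ∫⁻ x in dyadicShell x0 j, ENNReal.ofReal (tentConst Cd * CP / m * v) ∂μ :=
        setLIntegral_mono' (measurableSet_dyadicShell x0 j) fun x hx =>
          lipConst_tentAverage_le h hC hP hCP hf hV hx.1 hx.2
    _ = ENNReal.ofReal (tentConst Cd * CP / m * v) * μ (dyadicShell x0 j) :=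
        setLIntegral_const _ _
    _ ≤ ENNReal.ofReal (tentConst Cd * CP / m * v) * ENNReal.ofReal (Cd * m) := by
        gcongr
        have h1 := h.measure_ball_pow_le x0 (r := 2 ^ j) (by positivity) 1
        refine (measure_mono (t := ball x0 (2 ^ 1 * 2 ^ j)) fun x hx => ?_).trans (h1.trans ?_)
        · rw [mem_ball, pow_one]; exact hx.2
        · rw [pow_one, ENNReal.ofReal_mul (by positivity), ENNReal.ofReal_coe_nnreal, hm,
            Measure.real, ENNReal.ofReal_toReal (h.measure_ball_lt_top hC _ _).ne]
    _ = ENNReal.ofReal (tentConst Cd * CP * Cd) * totVarOn μ f (dyadicAnnulus x0 j) := by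
        rw [← ENNReal.ofReal_toReal hV, ← hv, ← ENNReal.ofReal_mul (by positivity),
          ← ENNReal.ofReal_mul (by positivity)]
        congr 1
        field_simp

theorem lintegral_lipConst_tentAverage_le (h : IsDoublingWith μ Cd) (hC : 1 ≤ Cd)
    (hP : SupportsPoincare μ CP) (hCP : 0 < CP) (hf : LocallyIntegrable f μ)
    (hV : totVarOn μ f univ ≠ ⊤) (k : ℕ) :
    ∫⁻ x in {x | (2:ℝ) ^ k ≤ dist x x0}, lipConst (tentAverage μ f x0) x ∂μ ≤
      ENNReal.ofReal (tentConst Cd * CP * Cd) *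
        ∑' i, totVarOn μ f (dyadicAnnulus x0 (i + k)) := by
  have hsub : {x | (2:ℝ) ^ k ≤ dist x x0} ⊆ ⋃ i, dyadicShell x0 (i + k) := by
    intro x hx
    have hx1 : (2:ℝ) ^ k ≤ dist x x0 := hx
    have h1 : 1 ≤ dist x x0 / 2 ^ k := by rwa [le_div_iff₀ (by positivity), one_mul]
    obtain ⟨n, hn1, hn2⟩ := exists_nat_pow_near h1 one_lt_two
    refine mem_iUnion.2 ⟨n, ?_, ?_⟩
    · rw [pow_add]; rwa [le_div_iff₀ (by positivity)] at hn1
    · rw [pow_add, ← mul_assoc, ← pow_succ']; rwa [div_lt_iff₀ (by positivity)] at hn2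
  calc _ ≤ ∫⁻ x in ⋃ i, dyadicShell x0 (i + k), lipConst (tentAverage μ f x0) x ∂μ :=
        lintegral_mono_set hsub
    _ ≤ ∑' i, ∫⁻ x in dyadicShell x0 (i + k), lipConst (tentAverage μ f x0) x ∂μ :=
        lintegral_iUnion_le _ _
    _ ≤ ∑' i, ENNReal.ofReal (tentConst Cd * CP * Cd) *
          totVarOn μ f (dyadicAnnulus x0 (i + k)) :=
        ENNReal.tsum_le_tsum fun i => lintegral_dyadicShell_lipConst_tentAverage_le h hC hP hCP hf
          (ne_top_of_le_ne_top hV (totVarOn_mono (subset_univ _)))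
    _ = _ := ENNReal.tsum_mul_left

theorem exists_forall_lipConst_tentAverage_le (h : IsDoublingWith μ Cd) (hC : 1 ≤ Cd)
    (hP : SupportsPoincare μ CP) (hCP : 0 < CP) (hf : LocallyIntegrable f μ)
    (hV : totVarOn μ f univ ≠ ⊤) (x0 : X) :
    ∃ L : ℝ≥0, ∀ p, 1 ≤ dist p x0 → lipConst (tentAverage μ f x0) p ≤ L := by
  refine ⟨Real.toNNReal (tentConst Cd * CP / μ.real (ball x0 1) * (totVarOn μ f univ).toReal),
    fun p hp => ?_⟩
  obtain ⟨n, hn1, hn2⟩ := exists_nat_pow_near hp one_lt_two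
  have hmono : totVarOn μ f (dyadicAnnulus x0 n) ≤ totVarOn μ f univ :=
    totVarOn_mono (subset_univ _)
  refine (lipConst_tentAverage_le h hC hP hCP hf (ne_top_of_le_ne_top hV hmono) hn1
    (by rwa [← pow_succ'])).trans ?_
  have ht := tentConst_nonneg Cd
  refine ENNReal.ofReal_le_ofReal ?_
  have h1 := h.measureReal_ball_pos hC x0 one_pos
  have h2 : μ.real (ball x0 1) ≤ μ.real (ball x0 (2 ^ n)) :=
    measureReal_mono (ball_subset_ball (one_le_pow₀ one_le_two)) (h.measure_ball_lt_top hC _ _).ne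
  gcongr

end TentAverageBV

section TentAverageL1

variable {X : Type u} [MetricSpace X] [ProperSpace X] [MeasurableSpace X] [BorelSpace X]
  {μ : Measure X} {Cd : ℝ≥0} {CP : ℝ} {f : X → ℝ} {x0 p : X} {j : ℕ}

theorem lintegral_closedBall_sub_tentAverage_le (h : IsDoublingWith μ Cd) (hC : 1 ≤ Cd)
    (hP : SupportsPoincare μ CP) (hCP : 0 < CP) (hf : LocallyIntegrable f μ)
    (hV : totVarOn μ f (dyadicAnnulus x0 j) ≠ ⊤) (hp : 2 ^ j ≤ dist p x0)
    (hp' : dist p x0 < 2 * 2 ^ j) {η : ℝ} (hη : 0 < η) :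
    ∫⁻ x in closedBall p (2 ^ j / 64), ENNReal.ofReal |tentAverage μ f x0 x - f x| ∂μ ≤
      ENNReal.ofReal (CP * (2 ^ j / 2) * (1 + tentConst Cd * Cd ^ 2) *
        ((totVarOn μ f (dyadicAnnulus x0 j)).toReal + η)) := by
  set a := dist p x0 with ha
  set R : ℝ := 2 ^ j with hR
  have hR0 : 0 < R := by positivity
  have ha0 : 0 < a := lt_of_lt_of_le hR0 hp
  set v := (totVarOn μ f (dyadicAnnulus x0 j)).toReal with hv
  have hv0 : 0 ≤ v := ENNReal.toReal_nonneg
  have ht := tentConst_nonneg Cd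
  set m := μ.real (ball x0 a) with hm
  have hm0 : 0 < m := h.measureReal_ball_pos hC x0 ha0
  obtain ⟨c, hc⟩ := exists_integral_sub_le_dyadic h hC hP hCP hf hV hp hp' hη
  rw [← ha] at hc
  have hI : ∫ y in ball p (a / 4), |f y - c| ∂μ ≤ CP * (R / 2) * (v + η) := by
    have h4 : a / 4 ≤ R / 2 := by linarith
    exact hc.trans (mul_le_mul_of_nonneg_right (mul_le_mul_of_nonneg_left h4 hCP.le)
      (by positivity))
  set I := CP * (R / 2) * (v + η) with hIdef
  have hI0 : 0 ≤ I := by positivity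
  have h1 := (tentAverage_estimates h hC ha0 (LocallyIntegrable.integrableOn_ball hf _ _) c
    hI).1
  have hsub : closedBall p (R / 64) ⊆ ball p (a / 32) := closedBall_subset_ball (by linarith)
  have hfin' : IsFiniteMeasure (μ.restrict (ball p (a / 4))) :=
    ⟨by simpa using h.measure_ball_lt_top hC p (a / 4)⟩
  have hint : Integrable (fun y => |f y - c|) (μ.restrict (ball p (a / 4))) :=
    ((LocallyIntegrable.integrableOn_ball hf p (a / 4)).sub (integrable_const c)).abs
  have hμ : μ (closedBall p (R / 64)) ≤ ENNReal.ofReal (Cd ^ 2 * m) := by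
    have h2 := h.measure_ball_pow_le x0 ha0 2
    refine (measure_mono fun x hx => ?_).trans (h2.trans (le_of_eq ?_))
    · rw [mem_closedBall] at hx
      rw [mem_ball]
      have := dist_triangle x p x0
      rw [← ha] at this
      linarith
    · rw [ENNReal.ofReal_mul (by positivity), ENNReal.ofReal_pow (by positivity),
        ENNReal.ofReal_coe_nnreal, hm, Measure.real,
        ENNReal.ofReal_toReal (h.measure_ball_lt_top hC _ _).ne]
  have hcm : Measurable fun _ : X => ENNReal.ofReal (tentConst Cd * I / m) := measurable_const
  calc ∫⁻ x in closedBall p (R / 64), ENNReal.ofReal |tentAverage μ f x0 x - f x| ∂μ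
      ≤ ∫⁻ x in closedBall p (R / 64),
          (ENNReal.ofReal (tentConst Cd * I / m) + ENNReal.ofReal |f x - c|) ∂μ := by
        refine setLIntegral_mono' isClosed_closedBall.measurableSet fun x hx => ?_
        rw [← ENNReal.ofReal_add (by positivity) (abs_nonneg _)]
        refine ENNReal.ofReal_le_ofReal ?_
        have h2 := h1 x (hsub hx)
        have h3 := abs_sub_le (tentAverage μ f x0 x) c (f x)
        rw [abs_sub_comm c] at h3
        linarith
    _ = ENNReal.ofReal (tentConst Cd * I / m) * μ (closedBall p (R / 64)) +
          ∫⁻ x in closedBall p (R / 64), ENNReal.ofReal |f x - c| ∂μ := by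
        rw [lintegral_add_left hcm, setLIntegral_const]
    _ ≤ ENNReal.ofReal (tentConst Cd * I / m) * ENNReal.ofReal (Cd ^ 2 * m) +
          ENNReal.ofReal I := by
        gcongr
        refine (lintegral_mono_set (t := ball p (a / 4))
          (hsub.trans (ball_subset_ball (by linarith)))).trans ?_
        rw [← ofReal_integral_eq_lintegral_ofReal hint
          (Eventually.of_forall fun _ => abs_nonneg _)]
        exact ENNReal.ofReal_le_ofReal hI
    _ = _ := by
        rw [← ENNReal.ofReal_mul (by positivity), ← ENNReal.ofReal_add (by positivity) hI0]
        congr 1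
        rw [hIdef]
        field_simp
        ring

/-- The constant in the `L¹` estimate for the tent average on a dyadic shell. -/
def tentL1Const (Cd : ℝ≥0) (CP : ℝ) : ℝ :=
  CP / 2 * (1 + tentConst Cd * Cd ^ 2) * Cd ^ 11

theorem tentL1Const_nonneg (Cd : ℝ≥0) (hCP : 0 < CP) : 0 ≤ tentL1Const Cd CP := by
  have := tentConst_nonneg Cd
  unfold tentL1Const
  positivity

theorem lintegral_dyadicShell_sub_tentAverage_le (h : IsDoublingWith μ Cd) (hC : 1 ≤ Cd)
    (hP : SupportsPoincare μ CP) (hCP : 0 < CP) (hf : LocallyIntegrable f μ)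
    (hV : totVarOn μ f (dyadicAnnulus x0 j) ≠ ⊤) {η : ℝ} (hη : 0 < η) :
    ∫⁻ x in dyadicShell x0 j, ENNReal.ofReal |tentAverage μ f x0 x - f x| ∂μ ≤
      ENNReal.ofReal (tentL1Const Cd CP * 2 ^ j *
        ((totVarOn μ f (dyadicAnnulus x0 j)).toReal + η)) := by
  set R : ℝ := 2 ^ j with hR
  have hR0 : 0 < R := by positivity
  set v := (totVarOn μ f (dyadicAnnulus x0 j)).toReal with hv
  have hv0 : 0 ≤ v := ENNReal.toReal_nonneg
  have ht := tentConst_nonneg Cd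
  set r := R / 256 with hr
  have hr0 : 0 < r := by positivity
  obtain ⟨s, hs, hdisj, hcov⟩ := Vitali.exists_disjoint_subfamily_covering_enlargement_closedBall
    (dyadicShell x0 j) id (fun _ => r) r (fun _ _ => le_rfl) 4 (by norm_num)
  replace hdisj : s.PairwiseDisjoint fun b => closedBall b r := hdisj
  have hsc : s.Countable := hdisj.countable_of_nonempty_interior fun b _ =>
    ⟨b, mem_interior_iff_mem_nhds.2 (closedBall_mem_nhds _ hr0)⟩
  have hcov' : dyadicShell x0 j ⊆ ⋃ b ∈ s, closedBall b (R / 64) := by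
    intro x hx
    obtain ⟨b, hb, hsub⟩ := hcov x hx
    refine mem_iUnion₂.2 ⟨b, hb, ?_⟩
    have := hsub (mem_closedBall_self hr0.le)
    rwa [hr, show 4 * (R / 256) = R / 64 by ring] at this
  set M := μ.real (ball x0 (4 * R)) with hM
  have hM0 : 0 < M := h.measureReal_ball_pos hC x0 (by positivity)
  have hMtop := (h.measure_ball_lt_top hC x0 (4 * R)).ne
  have hCd0 : (0:ℝ) < Cd := by
    have : (1:ℝ) ≤ Cd := by exact_mod_cast hC
    linarith
  set A := CP * (R / 2) * (1 + tentConst Cd * Cd ^ 2) * (v + η) with hA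
  have hA0 : 0 ≤ A := by positivity
  have hball : ∀ b ∈ s, μ (ball x0 (4 * R)) ≤ ENNReal.ofReal (Cd ^ 11) * μ (closedBall b r) := by
    intro b hb
    have hb2 : dist b x0 < 2 * R := (hs hb).2
    refine (measure_mono fun x hx => ?_).trans ((h.measure_ball_pow_le b hr0 11).trans ?_)
    · rw [mem_ball] at hx ⊢
      have := dist_triangle_right x b x0
      rw [hr]
      linarith
    · rw [ENNReal.ofReal_pow hCd0.le, ENNReal.ofReal_coe_nnreal]
      gcongr
      exact ball_subset_closedBall
  have hone : ∀ b ∈ s, ENNReal.ofReal A ≤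
      ENNReal.ofReal (A * Cd ^ 11 / M) * μ (closedBall b r) := by
    intro b hb
    calc ENNReal.ofReal A = ENNReal.ofReal (A / M) * μ (ball x0 (4 * R)) := by
          rw [← ENNReal.ofReal_toReal hMtop, ← ENNReal.ofReal_mul (by positivity)]
          congr 1
          rw [← Measure.real, ← hM]
          field_simp
      _ ≤ ENNReal.ofReal (A / M) * (ENNReal.ofReal (Cd ^ 11) * μ (closedBall b r)) := by
          gcongr
          exact hball b hb
      _ = _ := by
          rw [← mul_assoc, ← ENNReal.ofReal_mul (by positivity)]
          congr 2
          ring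
  have : Countable s := hsc.to_subtype
  calc ∫⁻ x in dyadicShell x0 j, ENNReal.ofReal |tentAverage μ f x0 x - f x| ∂μ
      ≤ ∫⁻ x in ⋃ b : s, closedBall (b : X) (R / 64),
          ENNReal.ofReal |tentAverage μ f x0 x - f x| ∂μ := by
        refine lintegral_mono_set ?_
        rwa [biUnion_eq_iUnion] at hcov'
    _ ≤ ∑' b : s, ∫⁻ x in closedBall (b : X) (R / 64),
          ENNReal.ofReal |tentAverage μ f x0 x - f x| ∂μ := lintegral_iUnion_le _ _
    _ ≤ ∑' b : s, ENNReal.ofReal (A * Cd ^ 11 / M) * μ (closedBall (b : X) r) :=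
        ENNReal.tsum_le_tsum fun b => (lintegral_closedBall_sub_tentAverage_le h hC hP hCP hf hV
          (hs b.2).1 (hs b.2).2 hη).trans (hone b b.2)
    _ = ENNReal.ofReal (A * Cd ^ 11 / M) * μ (⋃ b ∈ s, closedBall b r) := by
        rw [ENNReal.tsum_mul_left, measure_biUnion hsc hdisj
          fun b _ => isClosed_closedBall.measurableSet]
    _ ≤ ENNReal.ofReal (A * Cd ^ 11 / M) * μ (ball x0 (4 * R)) := by
        gcongr
        refine iUnion₂_subset fun b hb x hx => ?_
        have hb2 : dist b x0 < 2 * R := (hs hb).2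
        rw [mem_closedBall] at hx
        rw [mem_ball]
        have := dist_triangle x b x0
        linarith
    _ = _ := by
        rw [← ENNReal.ofReal_toReal hMtop, ← ENNReal.ofReal_mul (by positivity)]
        congr 1
        rw [← Measure.real, ← hM, hA, tentL1Const]
        field_simp

end TentAverageL1

section LipschitzApprox

variable {X : Type u} [MetricSpace X] [ProperSpace X] [MeasurableSpace X] [BorelSpace X]
  {μ : Measure X} {Cd : ℝ≥0} {CP : ℝ} {f : X → ℝ}

/-- The constant controlling the cost of truncating at scale `2 ^ k` in
`exists_lipschitz_approx`. -/
def truncConst (Cd : ℝ≥0) (CP : ℝ) : ℝ≥0∞ :=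
  ENNReal.ofReal (tentConst Cd * CP * Cd) + ENNReal.ofReal (4 * tentL1Const Cd CP)

theorem exists_lipschitz_approx (hX : IsGeodesic X) (h : IsDoublingWith μ Cd) (hC : 1 ≤ Cd)
    (hP : SupportsPoincare μ CP) (hCP : 0 < CP) (hf : LocallyIntegrable f μ)
    (hV : totVarOn μ f univ ≠ ⊤) (x0 : X) (k : ℕ) {ε : ℝ} (hε : 0 < ε) :
    ∃ g : X → ℝ, (∃ L : ℝ≥0, LipschitzWith L g) ∧
      ∫⁻ x in closedBall x0 (2 ^ k), ENNReal.ofReal |g x - f x| ∂μ ≤ ENNReal.ofReal ε ∧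
      ∫⁻ x, lipConst g x ∂μ ≤ totVarOn μ f (ball x0 (2 * 2 ^ k)) + ENNReal.ofReal ε +
        truncConst Cd CP * ∑' i, totVarOn μ f (dyadicAnnulus x0 (i + k)) := by
  have hfinK : IsFiniteMeasureOnCompacts μ := h.isFiniteMeasureOnCompacts hC
  have hfm : AEMeasurable f μ := hf.aestronglyMeasurable.aemeasurable
  have hVk : ∀ S : Set X, totVarOn μ f S ≠ ⊤ := fun S =>
    ne_top_of_le_ne_top hV (totVarOn_mono (subset_univ _))
  set R : ℝ := 2 ^ k with hR
  have hR1 : 1 ≤ R := one_le_pow₀ one_le_two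
  have hR0 : 0 < R := by linarith
  set w := tentAverage μ f x0 with hw
  have hC3 := tentL1Const_nonneg Cd hCP
  set C3 := tentL1Const Cd CP with hC3def
  have hdist : Continuous fun x => dist x x0 := by fun_prop
  obtain ⟨u, hu, hu1, hu2⟩ := exists_approx (hVk (ball x0 (2 * R)))
    (K := closedBall x0 (7 * R / 4)) isClosed_closedBall isBounded_closedBall
    (closedBall_subset_ball (by linarith)) (ε := ε / 16) (by positivity)
  have hW' : IsOpen {x : X | R < dist x x0} := isOpen_lt continuous_const hdist
  have hwl : LocallyLipschitzOnSet w {x | R < dist x x0} :=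
    locallyLipschitzOnSet_of_exists_mem_nhds fun x hx =>
      tentAverage_exists_lipschitzOnWith h hC hf (hR0.trans hx)
  set ρ : X → ℝ := fun x => 7 / 2 - 2 / R * dist x x0 with hρdef
  have hρ0 : ∀ x, 0 ≤ ρ x ↔ dist x x0 ≤ 7 * R / 4 := fun x => by
    have e : ρ x = (2 / R) * (7 * R / 4 - dist x x0) := by
      simp only [hρdef]; field_simp; ring
    rw [e, mul_nonneg_iff_of_pos_left (by positivity), sub_nonneg]
  have hρ1 : ∀ x, ρ x ≤ 1 ↔ 5 * R / 4 ≤ dist x x0 := fun x => by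
    have e : 1 - ρ x = (2 / R) * (dist x x0 - 5 * R / 4) := by
      simp only [hρdef]; field_simp; ring
    rw [← sub_nonneg, e, mul_nonneg_iff_of_pos_left (by positivity), sub_nonneg]
  have hρL : LipschitzWith (Real.toNNReal (2 / R)) ρ := by
    refine LipschitzWith.of_dist_le_mul fun x y => ?_
    rw [Real.dist_eq, Real.coe_toNNReal _ (by positivity)]
    have e : ρ x - ρ y = 2 / R * (dist y x0 - dist x x0) := by simp only [hρdef]; ring
    rw [e, abs_mul, abs_of_pos (by positivity : 0 < 2 / R), dist_comm x y]
    gcongr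
    exact abs_dist_sub_le y x x0
  set T : Set X := {x | 0 ≤ ρ x ∧ ρ x ≤ 1} with hT
  have hTK : T ⊆ closedBall x0 (7 * R / 4) := fun x hx => (hρ0 x).1 hx.1
  have hTS : T ⊆ dyadicShell x0 k := fun x hx => by
    have h1 := (hρ0 x).1 hx.1
    have h2 := (hρ1 x).1 hx.2
    constructor <;> rw [← hR] <;> linarith
  have hTm : MeasurableSet T := ((isClosed_le continuous_const hρL.continuous).inter
    (isClosed_le hρL.continuous continuous_const)).measurableSet
  have hTW : T ⊆ ball x0 (2 * R) := hTK.trans (closedBall_subset_ball (by linarith))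
  obtain ⟨g, hg, hgv, hgu, -, hgi⟩ := exists_glue (μ := μ) isOpen_ball hW' hu hwl hρL
    (fun x hx => by have := (hρ0 x).1 hx; rw [mem_ball]; linarith)
    (fun x hx => by have := (hρ1 x).1 hx; rw [mem_ofPred_eq]; linarith)
    (isBounded_closedBall.subset hTK)
  obtain ⟨L, hL⟩ := exists_forall_lipConst_tentAverage_le h hC hP hCP hf hV x0
  refine ⟨g, ?_, ?_, ?_⟩
  · obtain ⟨L', hL'⟩ := hg (closedBall x0 (2 * R)) isClosed_closedBall isBounded_closedBall
      (subset_univ _)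
    refine ⟨max L L', hX.lipschitzWith_of_lipConst_le hg fun x => ?_⟩
    rcases le_or_gt (dist x x0) (7 * R / 4) with hx | hx
    · refine (lipConst_le_of_lipschitzOnWith (closedBall_mem_nhds_of_mem ?_) hL').trans
        (by exact_mod_cast le_max_right L L')
      rw [mem_ball]; linarith
    · have he : g =ᶠ[𝓝 x] w := by
        filter_upwards [(isOpen_lt continuous_const hdist).mem_nhds hx] with y hy
        exact hgv y (le_of_not_ge fun hy' => absurd ((hρ0 y).1 hy') (not_le.2 hy))
      exact ((lipConst_le_of_eventuallyEq he).trans (hL x (by linarith))).trans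
        (by exact_mod_cast le_max_left L L')
  · have h1 : ∫⁻ x in closedBall x0 R, ENNReal.ofReal |g x - f x| ∂μ =
        ∫⁻ x in closedBall x0 R, ENNReal.ofReal |u x - f x| ∂μ := by
      refine setLIntegral_congr_fun isClosed_closedBall.measurableSet fun x hx => ?_
      have : g x = u x := hgu x (le_of_not_ge fun hx' => by
        have h2 := (hρ1 x).1 hx'
        rw [mem_closedBall] at hx
        linarith)
      simp only [this]
    rw [h1]
    refine (lintegral_mono_set (closedBall_subset_closedBall (by linarith))).trans
      (hu1.trans (ENNReal.ofReal_le_ofReal (by linarith)))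
  · set v := totVarOn μ f (dyadicAnnulus x0 k) with hv
    set η := ε / (8 * (C3 + 1)) with hη
    have hη0 : 0 < η := by positivity
    have hηε : 4 * C3 * η ≤ ε / 2 := by
      rw [hη, mul_div_assoc', div_le_div_iff₀ (by positivity) (by positivity)]
      nlinarith
    have hw1 := lintegral_dyadicShell_sub_tentAverage_le h hC hP hCP hf (x0 := x0)
      (hVk (dyadicAnnulus x0 k)) hη0
    rw [← hv, ← hR, ← hC3def, ← hw] at hw1
    have hw2 : ∫⁻ x in {x | R < dist x x0}, lipConst w x ∂μ ≤
        ENNReal.ofReal (tentConst Cd * CP * Cd) *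
          ∑' i, totVarOn μ f (dyadicAnnulus x0 (i + k)) :=
      (lintegral_mono_set (fun x (hx : R < dist x x0) => hx.le :
        {x | R < dist x x0} ⊆ {x | R ≤ dist x x0})).trans
        (lintegral_lipConst_tentAverage_le h hC hP hCP hf hV k)
    have huw : ∫⁻ x in T, ENNReal.ofReal |u x - w x| ∂μ ≤
        ENNReal.ofReal (ε / 16) + ENNReal.ofReal (C3 * R * (v.toReal + η)) := by
      refine (setLIntegral_le_add_of_abs_le (p := fun x => u x - w x) (v := w) hfm isOpen_ball hu
        hTm hTW fun x _ => ?_).trans (add_le_add ((lintegral_mono_set hTK).trans hu1)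
          ((lintegral_mono_set hTS).trans hw1))
      have := abs_sub_le (u x) (f x) (w x)
      rwa [abs_sub_comm (f x)] at this
    have hcost : 2 * (Real.toNNReal (2 / R) : ℝ≥0∞) *
        ∫⁻ x in T, ENNReal.ofReal |u x - w x| ∂μ ≤
        ENNReal.ofReal (3 * ε / 4) + ENNReal.ofReal (4 * C3) * v := by
      have hvr : ENNReal.ofReal v.toReal = v := ENNReal.ofReal_toReal (hVk _)
      have hv0 : 0 ≤ v.toReal := ENNReal.toReal_nonneg
      calc _ ≤ 2 * (Real.toNNReal (2 / R) : ℝ≥0∞) *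
            (ENNReal.ofReal (ε / 16) + ENNReal.ofReal (C3 * R * (v.toReal + η))) := by gcongr
        _ = ENNReal.ofReal (2 * (2 / R) * (ε / 16 + C3 * R * (v.toReal + η))) := by
            rw [← ENNReal.ofReal_add (by positivity) (by positivity), mul_assoc (2:ℝ),
              ENNReal.ofReal_mul zero_le_two, ENNReal.ofReal_mul (by positivity),
              ENNReal.ofReal_ofNat, mul_assoc]
            rfl
        _ ≤ ENNReal.ofReal (3 * ε / 4 + 4 * C3 * v.toReal) := by
            refine ENNReal.ofReal_le_ofReal ?_
            have e : 2 * (2 / R) * (ε / 16 + C3 * R * (v.toReal + η)) =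
                (ε / 4) / R + 4 * C3 * η + 4 * C3 * v.toReal := by
              field_simp
              ring
            have : (ε / 4) / R ≤ ε / 4 := div_le_self (by positivity) hR1
            rw [e]
            linarith
        _ = _ := by
            rw [ENNReal.ofReal_add (by positivity) (by positivity),
              ENNReal.ofReal_mul (p := 4 * C3) (by positivity), hvr]
    have hvs : v ≤ ∑' i, totVarOn μ f (dyadicAnnulus x0 (i + k)) := by
      have := ENNReal.le_tsum (f := fun i => totVarOn μ f (dyadicAnnulus x0 (i + k))) 0
      simpa using this
    set S := ∑' i, totVarOn μ f (dyadicAnnulus x0 (i + k)) with hS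
    calc ∫⁻ x, lipConst g x ∂μ
        ≤ totVarOn μ f (ball x0 (2 * R)) + ENNReal.ofReal (ε / 16) +
            ENNReal.ofReal (tentConst Cd * CP * Cd) * S +
            (ENNReal.ofReal (3 * ε / 4) + ENNReal.ofReal (4 * C3) * S) := by
          refine hgi.trans (add_le_add (add_le_add hu2 hw2) (hcost.trans ?_))
          gcongr
      _ = totVarOn μ f (ball x0 (2 * R)) + ENNReal.ofReal (ε / 16 + 3 * ε / 4) +
            truncConst Cd CP * S := by
          rw [truncConst, ← hC3def, ENNReal.ofReal_add (by positivity) (by positivity)]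
          ring
      _ ≤ _ := by
          gcongr
          linarith

end LipschitzApprox

theorem ENNReal.eventually_le_add_of_le_liminf {a ε : ℝ≥0∞} {s : ℕ → ℝ≥0∞} (ha : a ≠ ⊤)
    (hε : ε ≠ 0) (h : a ≤ liminf s atTop) : ∀ᶠ k in atTop, a ≤ s k + ε := by
  rcases eq_or_ne a 0 with rfl | h0
  · simp
  filter_upwards [eventually_lt_of_lt_liminf ((ENNReal.sub_lt_self ha h0 hε).trans_le h)]
    with k hk
  exact tsub_le_iff_right.1 hk.le

theorem ENNReal.eventually_le_add_of_limsup_le {a ε : ℝ≥0∞} {s : ℕ → ℝ≥0∞} (ha : a ≠ ⊤)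
    (hε : ε ≠ 0) (h : limsup s atTop ≤ a) : ∀ᶠ k in atTop, s k ≤ a + ε := by
  filter_upwards [eventually_lt_of_limsup_lt (h.trans_lt (ENNReal.lt_add_right ha hε))] with k hk
  exact hk.le

section WeakConvergence

variable {X : Type u} [MetricSpace X] [ProperSpace X] [MeasurableSpace X] [BorelSpace X]
  {μ : Measure X} {f : X → ℝ} {us : ℕ → X → ℝ}

omit [ProperSpace X] in
theorem eventually_setLIntegral_lipConst_add_totVarOn_compl_le
    (hV : totVarOn μ f univ ≠ ⊤) (hu : ∀ k, LocallyLipschitzOnSet (us k) univ)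
    (hL : TendstoL1loc μ us f univ)
    (hlim : Tendsto (fun k => ∫⁻ x, lipConst (us k) x ∂μ) atTop (𝓝 (totVarOn μ f univ)))
    {C : Set X} (hC : IsClosed C) {ε : ℝ≥0∞} (hε : ε ≠ 0) :
    ∀ᶠ k in atTop, ∫⁻ x in C, lipConst (us k) x ∂μ + totVarOn μ f Cᶜ ≤
      totVarOn μ f univ + ε := by
  have hε2 : ε / 2 ≠ 0 := by simpa using hε
  have h1 : totVarOn μ f Cᶜ ≤ liminf (fun k => ∫⁻ x in Cᶜ, lipConst (us k) x ∂μ) atTop :=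
    totVarOn_le_liminf (fun k => (hu k).mono (subset_univ _)) (hL.mono (subset_univ _))
  filter_upwards [ENNReal.eventually_le_add_of_le_liminf
    (ne_top_of_le_ne_top hV (totVarOn_mono (subset_univ _))) hε2 h1,
    ENNReal.eventually_le_add_of_limsup_le hV hε2 hlim.limsup_eq.le] with k hk1 hk2
  calc _ ≤ ∫⁻ x in C, lipConst (us k) x ∂μ + (∫⁻ x in Cᶜ, lipConst (us k) x ∂μ + ε / 2) := by
        gcongr
    _ = ∫⁻ x, lipConst (us k) x ∂μ + ε / 2 := by
        rw [← add_assoc, lintegral_add_compl _ hC.measurableSet]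
    _ ≤ totVarOn μ f univ + ε / 2 + ε / 2 := by gcongr
    _ = _ := by rw [add_assoc, ENNReal.add_halves]

theorem limsup_setLIntegral_lipConst_le_totVarSet [SigmaFinite μ] (hfm : AEMeasurable f μ)
    (hV : totVarOn μ f univ ≠ ⊤) (hu : ∀ k, LocallyLipschitzOnSet (us k) univ)
    (hL : TendstoL1loc μ us f univ)
    (hlim : Tendsto (fun k => ∫⁻ x, lipConst (us k) x ∂μ) atTop (𝓝 (totVarOn μ f univ)))
    (x0 : X) (htight : ∀ ε : ℝ≥0∞, ε ≠ 0 → ∃ R : ℝ,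
      totVarOn μ f univ ≤ totVarOn μ f (ball x0 R) + ε) {F : Set X} (hF : IsClosed F) :
    limsup (fun k => ∫⁻ x in F, lipConst (us k) x ∂μ) atTop ≤ totVarSet μ f F := by
  refine le_iInf fun W => le_iInf₂ fun hW hFW => ?_
  have hVk : ∀ S : Set X, totVarOn μ f S ≠ ⊤ := fun S =>
    ne_top_of_le_ne_top hV (totVarOn_mono (subset_univ _))
  refine ENNReal.le_of_forall_pos_le_add fun ε hε _ => ?_
  set δ : ℝ≥0∞ := (ε : ℝ≥0∞) / 3 with hδ
  have hδ0 : δ ≠ 0 := by simpa [hδ] using hε.ne'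
  obtain ⟨R, hR⟩ := htight δ hδ0
  set K := F ∩ closedBall x0 R with hK
  have hKc : IsCompact K := (isCompact_closedBall x0 R).inter_left hF
  have hKcl : IsClosed K := hF.inter isClosed_closedBall
  have h1 := totVarOn_univ_le_add_compl hfm hKc hKcl hW (inter_subset_left.trans hFW)
  have hBc : IsClosed (ball x0 R)ᶜ := isOpen_ball.isClosed_compl
  refine limsup_le_of_le (by isBoundedDefault) ?_
  filter_upwards [eventually_setLIntegral_lipConst_add_totVarOn_compl_le hV hu hL hlim hKcl hδ0,
    eventually_setLIntegral_lipConst_add_totVarOn_compl_le hV hu hL hlim hBc hδ0] with k hk1 hk2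
  have h2 : ∫⁻ x in K, lipConst (us k) x ∂μ ≤ totVarOn μ f W + δ := by
    refine (ENNReal.add_le_add_iff_right (hVk Kᶜ)).1 (hk1.trans ?_)
    calc _ ≤ totVarOn μ f W + totVarOn μ f Kᶜ + δ := by gcongr
      _ = _ := by ring
  have h3 : ∫⁻ x in (ball x0 R)ᶜ, lipConst (us k) x ∂μ ≤ δ + δ := by
    rw [compl_compl] at hk2
    refine (ENNReal.add_le_add_iff_right (hVk (ball x0 R))).1 (hk2.trans ?_)
    calc _ ≤ totVarOn μ f (ball x0 R) + δ + δ := by gcongr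
      _ = _ := by ring
  calc ∫⁻ x in F, lipConst (us k) x ∂μ
      ≤ ∫⁻ x in K ∪ (ball x0 R)ᶜ, lipConst (us k) x ∂μ := by
        refine lintegral_mono_set fun x hx => ?_
        by_cases hx' : x ∈ ball x0 R
        · exact Or.inl ⟨hx, ball_subset_closedBall hx'⟩
        · exact Or.inr hx'
    _ ≤ ∫⁻ x in K, lipConst (us k) x ∂μ + ∫⁻ x in (ball x0 R)ᶜ, lipConst (us k) x ∂μ :=
        lintegral_union_le _ _ _
    _ ≤ totVarOn μ f W + δ + (δ + δ) := add_le_add h2 h3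
    _ = totVarOn μ f W + ε := by rw [add_assoc, ← add_assoc δ, hδ, ENNReal.add_thirds]

end WeakConvergence

theorem statement13 {X : Type u} [MetricSpace X] [MeasurableSpace X] [BorelSpace X]
    (μ : Measure X) (Cd : ℝ≥0) (CP : ℝ) (hCd : 1 ≤ Cd) (hCP : 0 < CP)
    (hX : GoodSpace X μ Cd CP)
    (f : X → ℝ) (hf : IsBV μ f) :
    ∃ fk : ℕ → X → ℝ,
      (∀ k, ∃ L : ℝ≥0, LipschitzWith L (fk k)) ∧
      TendstoL1loc μ fk f Set.univ ∧
      Tendsto (fun k => ∫⁻ x, lipConst (fk k) x ∂μ) atTop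
        (𝓝 (totVarOn μ f Set.univ)) ∧
      (∀ U : Set X, IsOpen U →
        totVarOn μ f U ≤
          Filter.liminf (fun k => ∫⁻ x in U, lipConst (fk k) x ∂μ) atTop) ∧
      (∀ F : Set X, IsClosed F →
        Filter.limsup (fun k => ∫⁻ x in F, lipConst (fk k) x ∂μ) atTop ≤
          totVarSet μ f F) := by
  obtain ⟨hne, hcomplete, hgeo, hdoub, hpoin⟩ := hX
  obtain ⟨hfl, hVlt⟩ := hf
  have hV := hVlt.ne
  have hproper : ProperSpace X := hdoub.properSpace hCd
  have hfinK : IsFiniteMeasureOnCompacts μ := hdoub.isFiniteMeasureOnCompacts hCd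
  have hfm : AEMeasurable f μ := hfl.aestronglyMeasurable.aemeasurable
  obtain ⟨x0⟩ := hne.to_nonempty
  choose fk hLip hL1 hE using fun k : ℕ => exists_lipschitz_approx hgeo hdoub hCd hpoin hCP hfl
    hV x0 k (ε := 1 / ((k : ℝ) + 1)) (by positivity)
  have hloc : ∀ k, LocallyLipschitzOnSet (fk k) univ := fun k => by
    obtain ⟨L, hL⟩ := hLip k
    exact hL.locallyLipschitzOnSet univ
  have h1k : Tendsto (fun k : ℕ => 1 / ((k : ℝ) + 1)) atTop (𝓝 0) :=
    tendsto_one_div_add_atTop_nhds_zero_nat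
  have hconv : TendstoL1loc μ fk f univ :=
    tendstoL1loc_univ_of_le x0 (tendsto_pow_atTop_atTop_of_one_lt one_lt_two) h1k hL1
  set t : ℕ → ℝ≥0∞ := fun k => ENNReal.ofReal (1 / ((k : ℝ) + 1)) +
    truncConst Cd CP * ∑' i, totVarOn μ f (dyadicAnnulus x0 (i + k)) with ht
  have htlim : Tendsto t atTop (𝓝 0) := by
    have h1 := ENNReal.tendsto_sum_nat_add (fun j => totVarOn μ f (dyadicAnnulus x0 j))
      (ne_top_of_le_ne_top (ENNReal.mul_ne_top (by simp) hV) (tsum_totVarOn_dyadicAnnulus_le x0))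
    have h2 := ENNReal.Tendsto.const_mul (a := truncConst Cd CP) h1
      (Or.inr (ENNReal.add_ne_top.2 ⟨ENNReal.ofReal_ne_top, ENNReal.ofReal_ne_top⟩))
    have h3 := (ENNReal.tendsto_ofReal h1k).add h2
    simpa [ht] using h3
  have hE' : ∀ k, ∫⁻ x, lipConst (fk k) x ∂μ ≤
      totVarOn μ f (ball x0 (2 * 2 ^ k)) + t k := fun k => by
    rw [ht, ← add_assoc]
    exact hE k
  have hopen : ∀ U : Set X, totVarOn μ f U ≤
      liminf (fun k => ∫⁻ x in U, lipConst (fk k) x ∂μ) atTop := fun U =>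
    totVarOn_le_liminf (fun k => (hloc k).mono (subset_univ _)) (hconv.mono (subset_univ _))
  have hlow : totVarOn μ f univ ≤ liminf (fun k => ∫⁻ x, lipConst (fk k) x ∂μ) atTop := by
    simpa using hopen univ
  have hlim : Tendsto (fun k => ∫⁻ x, lipConst (fk k) x ∂μ) atTop (𝓝 (totVarOn μ f univ)) := by
    refine tendsto_of_le_liminf_of_limsup_le hlow ?_
    have h1 : Tendsto (fun k => totVarOn μ f univ + t k) atTop (𝓝 (totVarOn μ f univ + 0)) :=
      tendsto_const_nhds.add htlim
    rw [add_zero] at h1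
    rw [← h1.limsup_eq]
    refine limsup_le_limsup (Eventually.of_forall fun k => (hE' k).trans ?_)
    exact add_le_add (totVarOn_mono (subset_univ _)) le_rfl
  refine ⟨fk, hLip, hconv, hlim, fun U _ => hopen U, fun F hF =>
    limsup_setLIntegral_lipConst_le_totVarSet hfm hV hloc hconv hlim x0 (fun ε hε => ?_) hF⟩
  have hε2 : ε / 2 ≠ 0 := by simpa using hε
  obtain ⟨k, hk1, hk2⟩ := ((ENNReal.eventually_le_add_of_le_liminf hV hε2 hlow).and
    (ENNReal.eventually_le_add_of_limsup_le ENNReal.zero_ne_top hε2 htlim.limsup_eq.le)).exists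
  refine ⟨2 * 2 ^ k, hk1.trans ?_⟩
  rw [zero_add] at hk2
  calc _ ≤ totVarOn μ f (ball x0 (2 * 2 ^ k)) + ε / 2 + ε / 2 := by
        gcongr
        exact (hE' k).trans (by gcongr)
    _ = _ := by rw [add_assoc, ENNReal.add_halves]

end
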